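/- arXiv:1911.01544 — 2 statements merged into one kernel-verified Lean document; each statement's English description precedes it below -/
import Mathlib

section
/- For any ψ > 0, the map κ ↦ T(ψ,κ) is strictly monotonically increasing on {κ > 0 : ψ > ψ↓(κ)}, and lim_{κ→∞} T(ψ,κ) = ∞. -/
open MeasureTheory ProbabilityTheory Real Filter Set Topology

noncomputable section

namespace MaxMargin

/-- The standard Gaussian measure on `ℝ`. -/
def stdG : Measure ℝ := gaussianReal 0 1

/-- The function `F_κ(c₁,c₂) = (E[((κ − c₁·Y·G − c₂·Z)₊)²])^{1/2}` where `G, Z` are independent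
standard Gaussians and, conditionally on `G`, `Y ∈ {+1,−1}` with `P(Y = +1 | G) = f(G)`. -/
def Fk (f : ℝ → ℝ) (κ c₁ c₂ : ℝ) : ℝ :=
  Real.sqrt (∫ g, ∫ z,
    (f g * (max (κ - c₁ * g - c₂ * z) 0) ^ 2
      + (1 - f g) * (max (κ + c₁ * g - c₂ * z) 0) ^ 2) ∂stdG ∂stdG)

/-- Non-degeneracy of `f`: the variable `T = Y·G` satisfies `P(T < x) > 0` and `P(T > x) > 0`
for every `x ∈ ℝ`. -/
def NonDeg (f : ℝ → ℝ) : Prop :=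
  ∀ x : ℝ,
    (0 < ∫ g, (f g * (if g < x then (1:ℝ) else 0)
          + (1 - f g) * (if -g < x then (1:ℝ) else 0)) ∂stdG) ∧
    (0 < ∫ g, (f g * (if x < g then (1:ℝ) else 0)
          + (1 - f g) * (if x < -g then (1:ℝ) else 0)) ∂stdG)


/-- Points of `ℝ³` carrying the coordinates `(G, X, W)`. -/
abbrev Pt : Type := ℝ × ℝ × ℝ

/-- First coordinate `G`. -/
def Gc : Pt → ℝ := fun q => q.1

/-- Second coordinate `X`. -/
def Xc : Pt → ℝ := fun q => q.2.1

/-- Third coordinate `W`. -/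
def Wc : Pt → ℝ := fun q => q.2.2

/-- The inner product `⟨h₁,h₂⟩_P = E_P[h₁h₂]`. -/
def ip (P : Measure Pt) (h₁ h₂ : Pt → ℝ) : ℝ := ∫ q, h₁ q * h₂ q ∂P

/-- The norm `‖h‖_P = ⟨h,h⟩_P^{1/2}`. -/
def pnorm (P : Measure Pt) (h : Pt → ℝ) : ℝ := Real.sqrt (ip P h h)

/-- Projection onto the orthogonal complement of `W`: `Π_{W⊥}(h) = h − ⟨h,W⟩_P·W`. -/
def projW (P : Measure Pt) (h : Pt → ℝ) : Pt → ℝ := fun q => h q - ip P h Wc * Wc q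

/-- Partial derivative of `F_κ` in its first argument. -/
def d1F (f : ℝ → ℝ) (κ c₁ c₂ : ℝ) : ℝ := deriv (fun t => Fk f κ t c₂) c₁

/-- Partial derivative of `F_κ` in its second argument. -/
def d2F (f : ℝ → ℝ) (κ c₁ c₂ : ℝ) : ℝ := deriv (fun t => Fk f κ c₁ t) c₂

/-- `ψ*(0) = min_{c ∈ ℝ} F₀(c,1)²`. -/
def psiStar0 (f : ℝ → ℝ) : ℝ := ⨅ c : ℝ, (Fk f 0 c 1) ^ 2

/-- The functional `𝓡_{ψ,κ,P}(h) = ψ^{−1/2}·F_κ(⟨h, X^{1/2}W⟩_P, ‖Π_{W⊥}(X^{1/2}h)‖_P)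
+ ⟨h, X^{1/2}·Π_{W⊥}(G)⟩_P`. -/
def Rfun (f : ℝ → ℝ) (P : Measure Pt) (ψ κ : ℝ) (h : Pt → ℝ) : ℝ :=
  (Real.sqrt ψ)⁻¹ *
      Fk f κ (ip P h (fun q => Real.sqrt (Xc q) * Wc q))
        (pnorm P (projW P (fun q => Real.sqrt (Xc q) * h q)))
    + ip P h (fun q => Real.sqrt (Xc q) * projW P Gc q)

/-- `ζ(P) = ‖X^{−1/2}W‖_P^{−1}`. -/
def zetaP (P : Measure Pt) : ℝ := (pnorm P (fun q => (Real.sqrt (Xc q))⁻¹ * Wc q))⁻¹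

/-- `ζ = (E_μ[X⁻¹W²])^{−1/2}` for `(X,W) ~ μ`. -/
def zetaMu (μ : Measure (ℝ × ℝ)) : ℝ := (Real.sqrt (∫ q, (q.1)⁻¹ * q.2 ^ 2 ∂μ))⁻¹

/-- `ω = (E_μ[(1 − ζ²X⁻¹)²W²])^{1/2}`. -/
def omegaMu (μ : Measure (ℝ × ℝ)) : ℝ :=
  Real.sqrt (∫ q, (1 - (zetaMu μ) ^ 2 * (q.1)⁻¹) ^ 2 * q.2 ^ 2 ∂μ)

/-- `ψ₊(κ)`. -/
def psiPlus (f : ℝ → ℝ) (μ : Measure (ℝ × ℝ)) (κ : ℝ) : ℝ :=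
  if 0 < d1F f κ (zetaMu μ) 0 then 0
  else (d2F f κ (zetaMu μ) 0) ^ 2 - (omegaMu μ) ^ 2 * (d1F f κ (zetaMu μ) 0) ^ 2

/-- `ψ₋(κ)`. -/
def psiMinus (f : ℝ → ℝ) (μ : Measure (ℝ × ℝ)) (κ : ℝ) : ℝ :=
  if 0 < d1F f κ (-(zetaMu μ)) 0 then 0
  else (d2F f κ (-(zetaMu μ)) 0) ^ 2 - (omegaMu μ) ^ 2 * (d1F f κ (-(zetaMu μ)) 0) ^ 2

/-- `ψ↓(κ) = max{ψ*(0), ψ₊(κ), ψ₋(κ)}`. -/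
def psiDown (f : ℝ → ℝ) (μ : Measure (ℝ × ℝ)) (κ : ℝ) : ℝ :=
  max (max (psiStar0 f) (psiPlus f μ κ)) (psiMinus f μ κ)

/-- The system of equations with expectations over `(X,W) ~ μ`:
with `A = ∂₁F_κ(c₁,c₂) − c₁c₂⁻¹∂₂F_κ(c₁,c₂)` and
`D = c₂⁻¹∂₂F_κ(c₁,c₂)·X^{1/2} + ψ^{1/2}·s·X^{−1/2}`,
`−c₁ = E_μ[A·W²·X^{1/2}/D]`, `c₁² + c₂² = E_μ[(ψX + A²W²X)/D²]`, `1 = E_μ[(ψ + A²W²)/D²]`. -/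
def SolSysMu (f : ℝ → ℝ) (μ : Measure (ℝ × ℝ)) (ψ κ c₁ c₂ s : ℝ) : Prop :=
  (-c₁ = ∫ q, (d1F f κ c₁ c₂ - c₁ * c₂⁻¹ * d2F f κ c₁ c₂) * q.2 ^ 2 * Real.sqrt q.1
      / (c₂⁻¹ * d2F f κ c₁ c₂ * Real.sqrt q.1 + Real.sqrt ψ * s * (Real.sqrt q.1)⁻¹) ∂μ)
  ∧ (c₁ ^ 2 + c₂ ^ 2 = ∫ q,
      (ψ * q.1 + (d1F f κ c₁ c₂ - c₁ * c₂⁻¹ * d2F f κ c₁ c₂) ^ 2 * q.2 ^ 2 * q.1)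
      / (c₂⁻¹ * d2F f κ c₁ c₂ * Real.sqrt q.1 + Real.sqrt ψ * s * (Real.sqrt q.1)⁻¹) ^ 2 ∂μ)
  ∧ (1 = ∫ q,
      (ψ + (d1F f κ c₁ c₂ - c₁ * c₂⁻¹ * d2F f κ c₁ c₂) ^ 2 * q.2 ^ 2)
      / (c₂⁻¹ * d2F f κ c₁ c₂ * Real.sqrt q.1 + Real.sqrt ψ * s * (Real.sqrt q.1)⁻¹) ^ 2 ∂μ)

/-- `T(ψ,κ) = ψ^{−1/2}(F_κ(c₁,c₂) − c₁∂₁F_κ(c₁,c₂) − c₂∂₂F_κ(c₁,c₂)) − s`. -/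
def Tval (f : ℝ → ℝ) (ψ κ c₁ c₂ s : ℝ) : ℝ :=
  (Real.sqrt ψ)⁻¹ * (Fk f κ c₁ c₂ - c₁ * d1F f κ c₁ c₂ - c₂ * d2F f κ c₁ c₂) - s

/-! ### Generic `L²` facts -/

lemma int_mul {Ω : Type*} [MeasurableSpace Ω] {ν : Measure Ω} {u v : Ω → ℝ}
    (hu : MemLp u 2 ν) (hv : MemLp v 2 ν) : Integrable (fun q => u q * v q) ν :=
  hu.integrable_mul hv

lemma amgm {Ω : Type*} [MeasurableSpace Ω] {ν : Measure Ω} {u v : Ω → ℝ}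
    (hu : MemLp u 2 ν) (hv : MemLp v 2 ν) :
    2 * ∫ q, u q * v q ∂ν ≤ (∫ q, u q * u q ∂ν) + ∫ q, v q * v q ∂ν := by
  rw [← integral_const_mul, ← integral_add (int_mul hu hu) (int_mul hv hv)]
  refine integral_mono ((int_mul hu hv).const_mul 2) ((int_mul hu hu).add (int_mul hv hv)) ?_
  intro q
  simp only
  nlinarith [sq_nonneg (u q - v q)]

lemma cs {Ω : Type*} [MeasurableSpace Ω] {ν : Measure Ω} {u v : Ω → ℝ}
    (hu : MemLp u 2 ν) (hv : MemLp v 2 ν) :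
    ∫ q, u q * v q ∂ν ≤ √(∫ q, u q ^ 2 ∂ν) * √(∫ q, v q ^ 2 ∂ν) := by
  have hA : 0 ≤ ∫ q, u q ^ 2 ∂ν := integral_nonneg fun q => sq_nonneg _
  have hB : 0 ≤ ∫ q, v q ^ 2 ∂ν := integral_nonneg fun q => sq_nonneg _
  rw [← Real.sqrt_mul hA]
  apply Real.le_sqrt_of_sq_le
  have := discrim_le_zero (a := ∫ q, v q ^ 2 ∂ν) (b := 2 * ∫ q, u q * v q ∂ν)
    (c := ∫ q, u q ^ 2 ∂ν) (by
      intro t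
      have h : 0 ≤ ∫ q, (v q ^ 2 * (t * t) + (u q * v q) * (2 * t) + u q ^ 2) ∂ν :=
        integral_nonneg fun q => by
          have := sq_nonneg (u q + t * v q)
          simp only [Pi.zero_apply]
          nlinarith
      rw [integral_add, integral_add, integral_mul_const, integral_mul_const] at h
      · linarith
      · exact hv.integrable_sq.mul_const _
      · exact (int_mul hu hv).mul_const _
      · exact (hv.integrable_sq.mul_const _).add ((int_mul hu hv).mul_const _)
      · exact hu.integrable_sq)
  unfold discrim at this
  nlinarith

lemma pos_sandwich (t d : ℝ) :
    0 ≤ max (t + d) 0 ^ 2 - max t 0 ^ 2 - d * (2 * max t 0) ∧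
    max (t + d) 0 ^ 2 - max t 0 ^ 2 - d * (2 * max t 0) ≤ d ^ 2 := by
  rcases max_cases (t + d) 0 with ⟨h1, h1'⟩ | ⟨h1, h1'⟩ <;>
  rcases max_cases t 0 with ⟨h2, h2'⟩ | ⟨h2, h2'⟩ <;> rw [h1, h2] <;> constructor <;>
  nlinarith [sq_nonneg d, sq_nonneg (t + d), sq_nonneg t]

/-- Derivative of `t ↦ E[(V - tξ)₊²]`. -/
lemma hasDeriv_sq {Ω : Type*} [MeasurableSpace Ω] {ν : Measure Ω} {V ξ : Ω → ℝ}
    (hV : MemLp V 2 ν) (hξ : MemLp ξ 2 ν) (t₀ : ℝ) :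
    HasDerivAt (fun t => ∫ q, (max (V q - t * ξ q) 0) ^ 2 ∂ν)
      (-2 * ∫ q, ξ q * max (V q - t₀ * ξ q) 0 ∂ν) t₀ := by
  have hU : ∀ t : ℝ, MemLp (fun q => max (V q - t * ξ q) 0) 2 ν := fun t =>
    (hV.sub (hξ.const_mul t)).pos_part
  rw [hasDerivAt_iff_isLittleO]
  have hO : (fun t => (∫ q, (max (V q - t * ξ q) 0) ^ 2 ∂ν)
      - (∫ q, (max (V q - t₀ * ξ q) 0) ^ 2 ∂ν)
      - (t - t₀) • (-2 * ∫ q, ξ q * max (V q - t₀ * ξ q) 0 ∂ν))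
      =O[𝓝 t₀] fun t => (t - t₀) ^ 2 := by
    refine Asymptotics.IsBigO.of_bound (∫ q, ξ q ^ 2 ∂ν) (Eventually.of_forall fun t => ?_)
    have e : (∫ q, (max (V q - t * ξ q) 0) ^ 2 ∂ν)
      - (∫ q, (max (V q - t₀ * ξ q) 0) ^ 2 ∂ν)
      - (t - t₀) • (-2 * ∫ q, ξ q * max (V q - t₀ * ξ q) 0 ∂ν)
      = ∫ q, ((max (V q - t * ξ q) 0) ^ 2 - (max (V q - t₀ * ξ q) 0) ^ 2
        - ((t - t₀) * (-2)) * (ξ q * max (V q - t₀ * ξ q) 0)) ∂ν := by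
      rw [integral_sub, integral_sub, integral_const_mul]
      · simp only [smul_eq_mul]; ring
      · exact (hU t).integrable_sq
      · exact (hU t₀).integrable_sq
      · exact (hU t).integrable_sq.sub (hU t₀).integrable_sq
      · exact (int_mul hξ (hU t₀)).const_mul _
    have hintg : Integrable (fun q => (max (V q - t * ξ q) 0) ^ 2 - (max (V q - t₀ * ξ q) 0) ^ 2
        - ((t - t₀) * (-2)) * (ξ q * max (V q - t₀ * ξ q) 0)) ν :=
      ((hU t).integrable_sq.sub (hU t₀).integrable_sq).sub ((int_mul hξ (hU t₀)).const_mul _)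
    have pt : ∀ q, 0 ≤ ((max (V q - t * ξ q) 0) ^ 2 - (max (V q - t₀ * ξ q) 0) ^ 2
        - ((t - t₀) * (-2)) * (ξ q * max (V q - t₀ * ξ q) 0)) ∧
        ((max (V q - t * ξ q) 0) ^ 2 - (max (V q - t₀ * ξ q) 0) ^ 2
        - ((t - t₀) * (-2)) * (ξ q * max (V q - t₀ * ξ q) 0)) ≤ ξ q ^ 2 * (t - t₀) ^ 2 := by
      intro q
      have h := pos_sandwich (V q - t₀ * ξ q) (-(t - t₀) * ξ q)
      rw [show V q - t₀ * ξ q + -(t - t₀) * ξ q = V q - t * ξ q by ring] at h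
      constructor
      · linarith [h.1]
      · linarith [h.2]
    rw [e, Real.norm_of_nonneg (integral_nonneg fun q => (pt q).1),
      Real.norm_of_nonneg (sq_nonneg _), ← integral_mul_const]
    exact integral_mono hintg (hξ.integrable_sq.mul_const _) fun q => (pt q).2
  refine hO.trans_isLittleO ?_
  have : (fun t : ℝ => t - t₀) =o[𝓝 t₀] fun _ => (1 : ℝ) := by
    rw [Asymptotics.isLittleO_one_iff]
    have : Tendsto (fun t : ℝ => t - t₀) (𝓝 t₀) (𝓝 (t₀ - t₀)) :=
      (continuous_id.sub continuous_const).tendsto t₀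
    simpa using this
  have h2 := this.mul_isBigO (Asymptotics.isBigO_refl (fun t : ℝ => t - t₀) (𝓝 t₀))
  simpa [pow_two] using h2

lemma aux_div {x : ℝ} (hx : x ≠ 0) (y : ℝ) : (-2 * y) / (2 * x) * x = -y := by
  field_simp

lemma int_sub3 {Ω : Type*} [MeasurableSpace Ω] {ν : Measure Ω} {u v w : Ω → ℝ}
    (hu : Integrable u ν) (hv : Integrable v ν) (hw : Integrable w ν) (a b : ℝ) :
    (∫ q, u q ∂ν) - a * (∫ q, v q ∂ν) - b * (∫ q, w q ∂ν)
      = ∫ q, (u q - a * v q - b * w q) ∂ν := by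
  have h1 : ∫ q, (u q - a * v q) ∂ν = (∫ q, u q ∂ν) - a * (∫ q, v q ∂ν) := by
    rw [integral_sub hu (hv.const_mul _), integral_const_mul]
  have h2 : Integrable (fun q => u q - a * v q) ν := hu.sub (hv.const_mul _)
  rw [integral_sub h2 (hw.const_mul _), h1, integral_const_mul]

/-! ### The law of `(YG, Z)` -/

/-- Two independent standard Gaussians. -/
def N2 : Measure (ℝ × ℝ) := stdG.prod stdG

instance : IsProbabilityMeasure stdG := by unfold stdG; infer_instance
instance : IsProbabilityMeasure N2 := by unfold N2; infer_instance
instance : stdG.IsOpenPosMeasure := by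
  unfold stdG
  exact (gaussianReal_absolutelyContinuous' 0 one_ne_zero).isOpenPosMeasure
instance : N2.IsOpenPosMeasure := by unfold N2; infer_instance

lemma memLp_stdG : MemLp (fun x : ℝ => x) 2 stdG := memLp_id_gaussianReal' 2 (by simp)

/-- The law of `(YG, Z)`. -/
def law (f : ℝ → ℝ) : Measure (ℝ × ℝ) :=
  N2.withDensity (fun q => ((f q.1).toNNReal : ENNReal))
    + (N2.withDensity (fun q => ((1 - f q.1).toNNReal : ENNReal))).map (fun q => (-q.1, q.2))

lemma wd_le {d : ℝ × ℝ → ℝ} (hd1 : ∀ q, d q ≤ 1) :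
    N2.withDensity (fun q => ((d q).toNNReal : ENNReal)) ≤ N2 := by
  conv_rhs => rw [← withDensity_one (μ := N2)]
  refine withDensity_mono (Eventually.of_forall fun q => ?_)
  simp only [Pi.one_apply]
  have : (d q).toNNReal ≤ 1 := by simpa using Real.toNNReal_le_toNNReal (hd1 q)
  exact_mod_cast this

lemma meas_neg : Measurable (fun q : ℝ × ℝ => (-q.1, q.2)) := by fun_prop


lemma N2_fst : MemLp (fun q : ℝ × ℝ => q.1) 2 N2 := memLp_stdG.comp_fst stdG
lemma N2_snd : MemLp (fun q : ℝ × ℝ => q.2) 2 N2 := memLp_stdG.comp_snd stdG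

lemma integrable_law {f : ℝ → ℝ} (hf01 : ∀ x, f x ∈ Set.Icc (0:ℝ) 1)
    {φ : ℝ × ℝ → ℝ} (hφ : Measurable φ) (h1 : Integrable φ N2)
    (h2 : Integrable (fun q : ℝ × ℝ => φ (-q.1, q.2)) N2) : Integrable φ (law f) := by
  unfold law
  refine Integrable.add_measure ?_ ?_
  · exact h1.mono_measure (wd_le fun q => (hf01 q.1).2)
  · rw [integrable_map_measure hφ.aestronglyMeasurable meas_neg.aemeasurable]
    exact h2.mono_measure (wd_le fun q => by linarith [(hf01 q.1).1])

lemma integral_law {f : ℝ → ℝ} (hf : Continuous f) (hf01 : ∀ x, f x ∈ Set.Icc (0:ℝ) 1)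
    {φ : ℝ × ℝ → ℝ} (hφ : Measurable φ) (h1 : Integrable φ N2)
    (h2 : Integrable (fun q : ℝ × ℝ => φ (-q.1, q.2)) N2) :
    ∫ q, φ q ∂(law f) = ∫ q, (f q.1 * φ q + (1 - f q.1) * φ (-q.1, q.2)) ∂N2 := by
  have hfm := hf.measurable
  have m1 : Measurable (fun q : ℝ × ℝ => (f q.1).toNNReal) := by fun_prop
  have m2 : Measurable (fun q : ℝ × ℝ => (1 - f q.1).toNNReal) := by fun_prop
  have i1 := h1.mono_measure (wd_le fun q => (hf01 q.1).2)
  have i2 := h2.mono_measure (wd_le fun q => (by linarith [(hf01 q.1).1] : 1 - f q.1 ≤ 1))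
  have i3 := (integrable_map_measure (f := fun q : ℝ × ℝ => (-q.1, q.2)) hφ.aestronglyMeasurable
    meas_neg.aemeasurable).2 i2
  unfold law
  rw [integral_add_measure i1 i3, integral_map meas_neg.aemeasurable hφ.aestronglyMeasurable,
    integral_withDensity_eq_integral_smul m1, integral_withDensity_eq_integral_smul m2,
    ← integral_add]
  · refine integral_congr_ae (Eventually.of_forall fun q => ?_)
    simp only [NNReal.smul_def, smul_eq_mul]
    rw [Real.coe_toNNReal _ (hf01 q.1).1, Real.coe_toNNReal _ (by linarith [(hf01 q.1).2])]
  · exact (integrable_withDensity_iff_integrable_smul m1).1 i1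
  · exact (integrable_withDensity_iff_integrable_smul m2).1 i2

lemma law_fst {f : ℝ → ℝ} (hf01 : ∀ x, f x ∈ Set.Icc (0:ℝ) 1)
    : MemLp (fun q : ℝ × ℝ => q.1) 2 (law f) := by
  rw [memLp_two_iff_integrable_sq (by fun_prop)]
  refine integrable_law hf01 (by fun_prop) N2_fst.integrable_sq ?_
  simpa using N2_fst.integrable_sq

lemma law_snd {f : ℝ → ℝ} (hf01 : ∀ x, f x ∈ Set.Icc (0:ℝ) 1)
    : MemLp (fun q : ℝ × ℝ => q.2) 2 (law f) := by
  rw [memLp_two_iff_integrable_sq (by fun_prop)]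
  exact integrable_law hf01 (by fun_prop) N2_snd.integrable_sq N2_snd.integrable_sq

lemma law_prob {f : ℝ → ℝ} (hf : Continuous f) (hf01 : ∀ x, f x ∈ Set.Icc (0:ℝ) 1)
    : IsProbabilityMeasure (law f) := by
  have hfin : IsFiniteMeasure (law f) := by
    have := integrable_law hf01 (φ := fun _ => (1:ℝ)) measurable_const (integrable_const _)
      (integrable_const _)
    rw [integrable_const_iff] at this
    simpa using this
  have h := integral_law hf hf01 (φ := fun _ => (1:ℝ)) measurable_const (integrable_const _)
      (integrable_const _)
  simp at h
  refine ⟨?_⟩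
  rw [measureReal_def] at h
  exact (ENNReal.toReal_eq_one_iff _).1 h

lemma law_U {f : ℝ → ℝ} (hf : Continuous f) (hf01 : ∀ x, f x ∈ Set.Icc (0:ℝ) 1)
    (κ a b : ℝ) : MemLp (fun q : ℝ × ℝ => max (κ - a * q.1 - b * q.2) 0) 2 (law f) := by
  have := law_prob hf hf01
  exact (((memLp_const κ).sub ((law_fst hf01).const_mul a)).sub
    ((law_snd hf01).const_mul b)).pos_part

lemma Fk_eq {f : ℝ → ℝ} (hf : Continuous f) (hf01 : ∀ x, f x ∈ Set.Icc (0:ℝ) 1)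
    (κ a b : ℝ) :
    Fk f κ a b = √(∫ q, (max (κ - a * q.1 - b * q.2) 0) ^ 2 ∂(law f)) := by
  have hm : ∀ a b : ℝ, MemLp (fun q : ℝ × ℝ => max (κ - a * q.1 - b * q.2) 0) 2 N2 := fun a b =>
    (((memLp_const κ).sub (N2_fst.const_mul a)).sub (N2_snd.const_mul b)).pos_part
  have h1 := (hm a b).integrable_sq
  have h2 : Integrable (fun q : ℝ × ℝ => max (κ - a * (-q.1) - b * q.2) 0 ^ 2) N2 := by
    simpa using (hm (-a) b).integrable_sq
  rw [integral_law hf hf01 (by fun_prop) h1 h2]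
  unfold Fk N2
  rw [integral_prod]
  · simp
  · refine Integrable.add (h1.bdd_mul (c := 1) (by fun_prop) ?_) (h2.bdd_mul (c := 1) (by fun_prop) ?_)
    · refine Eventually.of_forall fun q => ?_
      rw [Real.norm_of_nonneg (hf01 _).1]; exact (hf01 _).2
    · refine Eventually.of_forall fun q => ?_
      rw [Real.norm_of_nonneg (by linarith [(hf01 q.1).2])]; linarith [(hf01 q.1).1]

/-- Positivity of `E[(κ - aT - bZ)₊²]`. -/
lemma Q_pos {f : ℝ → ℝ} (hf : Continuous f) (hf01 : ∀ x, f x ∈ Set.Icc (0:ℝ) 1)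
    {κ : ℝ} (hκ : 0 < κ) (a b : ℝ) :
    0 < ∫ q, (max (κ - a * q.1 - b * q.2) 0) ^ 2 ∂(law f) := by
  have hm : ∀ a b : ℝ, MemLp (fun q : ℝ × ℝ => max (κ - a * q.1 - b * q.2) 0) 2 N2 := fun a b =>
    (((memLp_const κ).sub (N2_fst.const_mul a)).sub (N2_snd.const_mul b)).pos_part
  have h1 := (hm a b).integrable_sq
  have h2 : Integrable (fun q : ℝ × ℝ => max (κ - a * (-q.1) - b * q.2) 0 ^ 2) N2 := by
    simpa using (hm (-a) b).integrable_sq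
  have hi : Integrable (fun q : ℝ × ℝ => f q.1 * max (κ - a * q.1 - b * q.2) 0 ^ 2
      + (1 - f q.1) * max (κ - a * (-q.1) - b * q.2) 0 ^ 2) N2 := by
    refine Integrable.add (h1.bdd_mul (c := 1) (by fun_prop) ?_)
      (h2.bdd_mul (c := 1) (by fun_prop) ?_)
    · refine Eventually.of_forall fun q => ?_
      rw [Real.norm_of_nonneg (hf01 _).1]; exact (hf01 _).2
    · refine Eventually.of_forall fun q => ?_
      rw [Real.norm_of_nonneg (by linarith [(hf01 q.1).2])]; linarith [(hf01 q.1).1]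
  have hnn : 0 ≤ (fun q : ℝ × ℝ => f q.1 * max (κ - a * q.1 - b * q.2) 0 ^ 2
      + (1 - f q.1) * max (κ - a * (-q.1) - b * q.2) 0 ^ 2) := fun q =>
    add_nonneg (mul_nonneg (hf01 _).1 (sq_nonneg _))
      (mul_nonneg (by linarith [(hf01 q.1).2]) (sq_nonneg _))
  refine lt_of_le_of_ne (integral_nonneg fun q => sq_nonneg _) fun h0 => ?_
  rw [integral_law hf hf01 (by fun_prop) h1 h2] at h0
  have h3 := (integral_eq_zero_iff_of_nonneg hnn hi).1 h0.symm
  have h4 := (Continuous.ae_eq_iff_eq N2 (by fun_prop) (by exact continuous_const)).1 h3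
  have h5 := congrFun h4 (0, 0)
  simp [max_eq_left hκ.le] at h5
  have : f 0 * κ ^ 2 + (1 - f 0) * κ ^ 2 = κ ^ 2 := by ring
  rw [this] at h5
  exact (pow_pos hκ 2).ne' h5

lemma Fk_pos {f : ℝ → ℝ} (hf : Continuous f) (hf01 : ∀ x, f x ∈ Set.Icc (0:ℝ) 1)
    {κ : ℝ} (hκ : 0 < κ) (a b : ℝ) : 0 < Fk f κ a b := by
  rw [Fk_eq hf hf01]; exact Real.sqrt_pos.2 (Q_pos hf hf01 hκ a b)

lemma d1F_eq {f : ℝ → ℝ} (hf : Continuous f) (hf01 : ∀ x, f x ∈ Set.Icc (0:ℝ) 1)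
    {κ : ℝ} (hκ : 0 < κ) (a b : ℝ) :
    d1F f κ a b * Fk f κ a b = - ∫ q, q.1 * max (κ - a * q.1 - b * q.2) 0 ∂(law f) := by
  have := law_prob hf hf01
  have h := hasDeriv_sq (ν := law f) (V := fun q => κ - b * q.2) (ξ := fun q => q.1)
    ((memLp_const κ).sub ((law_snd hf01).const_mul b)) (law_fst hf01) a
  have e : ∀ (t : ℝ) (q : ℝ × ℝ), κ - b * q.2 - t * q.1 = κ - t * q.1 - b * q.2 := by
    intros; ring
  simp only [e] at h
  have h' := h.sqrt (Q_pos hf hf01 hκ a b).ne'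
  have hF := Fk_pos hf hf01 hκ a b
  unfold d1F
  simp only [Fk_eq hf hf01] at hF ⊢
  rw [h'.deriv]
  exact aux_div hF.ne' _

lemma d2F_eq {f : ℝ → ℝ} (hf : Continuous f) (hf01 : ∀ x, f x ∈ Set.Icc (0:ℝ) 1)
    {κ : ℝ} (hκ : 0 < κ) (a b : ℝ) :
    d2F f κ a b * Fk f κ a b = - ∫ q, q.2 * max (κ - a * q.1 - b * q.2) 0 ∂(law f) := by
  have := law_prob hf hf01
  have h := hasDeriv_sq (ν := law f) (V := fun q => κ - a * q.1) (ξ := fun q => q.2)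
    ((memLp_const κ).sub ((law_fst hf01).const_mul a)) (law_snd hf01) b
  have h' := h.sqrt (Q_pos hf hf01 hκ a b).ne'
  have hF := Fk_pos hf hf01 hκ a b
  unfold d2F
  simp only [Fk_eq hf hf01] at hF ⊢
  rw [h'.deriv]
  exact aux_div hF.ne' _

/-- The gradient inequality for the convex function `F_κ`. -/
lemma Fk_grad {f : ℝ → ℝ} (hf : Continuous f) (hf01 : ∀ x, f x ∈ Set.Icc (0:ℝ) 1)
    {κ : ℝ} (hκ : 0 < κ) (a b a' b' : ℝ) :
    Fk f κ a b + d1F f κ a b * (a' - a) + d2F f κ a b * (b' - b) ≤ Fk f κ a' b' := by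
  have := law_prob hf hf01
  have hF := Fk_pos hf hf01 hκ a b
  have hU := law_U hf hf01 κ a b
  have hU' := law_U hf hf01 κ a' b'
  have hcs := cs hU' hU
  rw [← Fk_eq hf hf01, ← Fk_eq hf hf01] at hcs
  have hsq : Fk f κ a b * Fk f κ a b = ∫ q, (max (κ - a * q.1 - b * q.2) 0) ^ 2 ∂(law f) := by
    rw [Fk_eq hf hf01, Real.mul_self_sqrt (Q_pos hf hf01 hκ a b).le]
  have i1 := hU.integrable_sq
  have i2 := int_mul (law_fst hf01) hU
  have i3 := int_mul (law_snd hf01) hU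
  have hlow : (∫ q, (max (κ - a * q.1 - b * q.2) 0) ^ 2 ∂(law f))
      - (a' - a) * (∫ q, q.1 * max (κ - a * q.1 - b * q.2) 0 ∂(law f))
      - (b' - b) * (∫ q, q.2 * max (κ - a * q.1 - b * q.2) 0 ∂(law f))
      ≤ ∫ q, max (κ - a' * q.1 - b' * q.2) 0 * max (κ - a * q.1 - b * q.2) 0 ∂(law f) := by
    rw [int_sub3 i1 i2 i3]
    refine integral_mono ((i1.sub (i2.const_mul _)).sub (i3.const_mul _)) (int_mul hU' hU)
      fun q => ?_
    simp only
    have hu : 0 ≤ max (κ - a * q.1 - b * q.2) 0 := le_max_right _ _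
    have hsq : max (κ - a * q.1 - b * q.2) 0 ^ 2
        = (κ - a * q.1 - b * q.2) * max (κ - a * q.1 - b * q.2) 0 := by
      rcases max_cases (κ - a * q.1 - b * q.2) 0 with ⟨h1, _⟩ | ⟨h1, _⟩ <;> rw [h1] <;> ring
    have := mul_le_mul_of_nonneg_right (le_max_left (κ - a' * q.1 - b' * q.2) 0) hu
    rw [hsq]
    linarith
  have e1 := d1F_eq hf hf01 hκ a b
  have e2 := d2F_eq hf hf01 hκ a b
  refine le_of_mul_le_mul_right ?_ hF
  have : (Fk f κ a b + d1F f κ a b * (a' - a) + d2F f κ a b * (b' - b)) * Fk f κ a b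
      = Fk f κ a b * Fk f κ a b + (a' - a) * (d1F f κ a b * Fk f κ a b)
        + (b' - b) * (d2F f κ a b * Fk f κ a b) := by ring
  rw [this, e1, e2, hsq]
  linarith

lemma Fk_neg {f : ℝ → ℝ}
    (κ a b : ℝ) : Fk f κ a (-b) = Fk f κ a b := by
  unfold Fk
  congr 2
  ext g
  have hmap : stdG.map (fun x => -x) = stdG := by
    unfold stdG; rw [gaussianReal_map_neg]; simp
  conv_rhs => rw [← hmap]
  rw [integral_map (by fun_prop) (by fun_prop)]
  simp

lemma d2F_nonneg {f : ℝ → ℝ} (hf : Continuous f) (hf01 : ∀ x, f x ∈ Set.Icc (0:ℝ) 1)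
    {κ : ℝ} (hκ : 0 < κ) (a : ℝ) {b : ℝ} (hb : 0 < b) : 0 ≤ d2F f κ a b := by
  have h := Fk_grad hf hf01 hκ a b a (-b)
  rw [Fk_neg] at h
  by_contra hneg
  push Not at hneg
  nlinarith

lemma Fk_strict {f : ℝ → ℝ} (hf : Continuous f) (hf01 : ∀ x, f x ∈ Set.Icc (0:ℝ) 1)
    {κ κ' : ℝ} (hκ : 0 < κ) (hlt : κ < κ') (a b : ℝ) :
    Fk f κ a b < Fk f κ' a b := by
  rw [Fk_eq hf hf01, Fk_eq hf hf01]
  have hU := (law_U hf hf01 κ a b).integrable_sq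
  have hU' := (law_U hf hf01 κ' a b).integrable_sq
  apply Real.sqrt_lt_sqrt (Q_pos hf hf01 hκ a b).le
  have hle : ∀ q : ℝ × ℝ, max (κ - a * q.1 - b * q.2) 0 ^ 2 ≤ max (κ' - a * q.1 - b * q.2) 0 ^ 2 :=
    fun q => pow_le_pow_left₀ (le_max_right _ _) (max_le_max (by linarith) le_rfl) 2
  refine lt_of_le_of_ne (integral_mono hU hU' hle) fun heq => ?_
  have h0 := (integral_eq_zero_iff_of_nonneg (fun q => sub_nonneg.2 (hle q)) (hU'.sub hU)).1
    (by simp only; rw [integral_sub hU' hU, heq, sub_self])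
  have hz : ∫ q, (max (κ - a * q.1 - b * q.2) 0) ^ 2 ∂(law f) = 0 := by
    rw [integral_eq_zero_iff_of_nonneg (fun q => sq_nonneg _) hU]
    filter_upwards [h0] with q hq
    simp only [Pi.zero_apply] at hq ⊢
    rcases le_or_gt (κ - a * q.1 - b * q.2) 0 with h | h
    · rw [max_eq_right h]; ring
    · rw [max_eq_left h.le, max_eq_left (by linarith)] at hq
      nlinarith
  exact (Q_pos hf hf01 hκ a b).ne' hz

lemma Fk_lower {f : ℝ → ℝ} (hf : Continuous f) (hf01 : ∀ x, f x ∈ Set.Icc (0:ℝ) 1)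
    : ∃ m₁ m₂ : ℝ, ∀ κ a b : ℝ, κ - a * m₁ - b * m₂ ≤ Fk f κ a b := by
  have := law_prob hf hf01
  refine ⟨∫ q, q.1 ∂(law f), ∫ q, q.2 ∂(law f), fun κ a b => ?_⟩
  have hU := law_U hf hf01 κ a b
  have h := cs hU (memLp_const (1:ℝ))
  rw [← Fk_eq hf hf01] at h
  simp at h
  refine le_trans ?_ h
  have i1 := (law_fst hf01).integrable (by norm_num)
  have i2 := (law_snd hf01).integrable (by norm_num)
  have e : κ - a * (∫ q, q.1 ∂(law f)) - b * (∫ q, q.2 ∂(law f))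
      = ∫ q, (κ - a * q.1 - b * q.2) ∂(law f) := by
    rw [← int_sub3 (integrable_const _) i1 i2]
    simp
  rw [e]
  exact integral_mono (((integrable_const _).sub (i1.const_mul _)).sub (i2.const_mul _))
    (hU.integrable (by norm_num)) fun q => le_max_left _ _


/-! ### The optimisation over `μ` -/

/-- The vector `-h = (p, r)` (coefficients along `G` and `1`) attached to a solution. -/
structure HData (μ : Measure (ℝ × ℝ)) (c₁ c₂ : ℝ) (p r : ℝ × ℝ → ℝ) : Prop where
  hp : MemLp p 2 μ
  hr : MemLp r 2 μ
  hP : MemLp (fun q => √q.1 * p q) 2 μ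
  hR : MemLp (fun q => √q.1 * r q) 2 μ
  e1 : c₁ = - ∫ q, (√q.1 * r q) * q.2 ∂μ
  e2 : c₁ ^ 2 + c₂ ^ 2 = (∫ q, (√q.1 * p q) * (√q.1 * p q) ∂μ)
    + ∫ q, (√q.1 * r q) * (√q.1 * r q) ∂μ
  e3 : 1 = (∫ q, p q * p q ∂μ) + ∫ q, r q * r q ∂μ


lemma memLp_w {μ : Measure (ℝ × ℝ)} (hw2 : ∫ q, q.2 ^ 2 ∂μ = 1)
    : MemLp (fun q : ℝ × ℝ => q.2) 2 μ := by
  refine (memLp_two_iff_integrable_sq (by fun_prop)).2 (.of_integral_ne_zero ?_)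
  rw [hw2]; exact one_ne_zero

lemma exists_data {μ : Measure (ℝ × ℝ)} [IsProbabilityMeasure μ] {xmin xmax : ℝ} (hxmin : 0 < xmin) (hsupp : ∀ᵐ q ∂μ, q.1 ∈ Set.Icc xmin xmax) (hw2 : ∫ q, q.2 ^ 2 ∂μ = 1)
    {ψ c₁ c₂ s F₁ F₂ : ℝ} (hψ : 0 < ψ) (hc₂ : 0 < c₂) (hs : 0 < s) (hF₂ : 0 ≤ F₂)
    (h1 : -c₁ = ∫ q, (F₁ - c₁ * c₂⁻¹ * F₂) * q.2 ^ 2 * √q.1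
      / (c₂⁻¹ * F₂ * √q.1 + √ψ * s * (√q.1)⁻¹) ∂μ)
    (h2 : c₁ ^ 2 + c₂ ^ 2 = ∫ q,
      (ψ * q.1 + (F₁ - c₁ * c₂⁻¹ * F₂) ^ 2 * q.2 ^ 2 * q.1)
      / (c₂⁻¹ * F₂ * √q.1 + √ψ * s * (√q.1)⁻¹) ^ 2 ∂μ)
    (h3 : 1 = ∫ q, (ψ + (F₁ - c₁ * c₂⁻¹ * F₂) ^ 2 * q.2 ^ 2)
      / (c₂⁻¹ * F₂ * √q.1 + √ψ * s * (√q.1)⁻¹) ^ 2 ∂μ) :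
    ∃ p r : ℝ × ℝ → ℝ, HData μ c₁ c₂ p r ∧
      ∀ᵐ q ∂μ, √ψ * √q.1 = p q * (c₂⁻¹ * F₂ * q.1 + √ψ * s) ∧
        (F₁ - c₁ * c₂⁻¹ * F₂) * q.2 * √q.1 = r q * (c₂⁻¹ * F₂ * q.1 + √ψ * s) := by
  have hw := memLp_w hw2
  set A := F₁ - c₁ * c₂⁻¹ * F₂ with hA
  set α := c₂⁻¹ * F₂ with hα
  have hα0 : 0 ≤ α := by positivity
  have he : 0 < √ψ := Real.sqrt_pos.2 hψ
  have hee : √ψ * √ψ = ψ := Real.mul_self_sqrt hψ.le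
  set β := √ψ * s with hβ
  have hβ0 : 0 < β := by positivity
  have hD : ∀ᵐ q ∂μ, 0 < √q.1 ∧ √q.1 ≤ √xmax ∧ √q.1 * √q.1 = q.1 ∧
      β * (√xmax)⁻¹ ≤ α * √q.1 + β * (√q.1)⁻¹ := by
    filter_upwards [hsupp] with q hq
    have hq0 : 0 < q.1 := lt_of_lt_of_le hxmin hq.1
    have h0 : 0 < √q.1 := Real.sqrt_pos.2 hq0
    have h1 : √q.1 ≤ √xmax := Real.sqrt_le_sqrt hq.2
    refine ⟨h0, h1, Real.mul_self_sqrt hq0.le, ?_⟩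
    have h2 : (√xmax)⁻¹ ≤ (√q.1)⁻¹ := inv_anti₀ h0 h1
    have := mul_le_mul_of_nonneg_left h2 hβ0.le
    have := mul_nonneg hα0 h0.le
    linarith
  have hD0 : ∀ᵐ q ∂μ, 0 < α * √q.1 + β * (√q.1)⁻¹ := by
    filter_upwards [hD] with q hq
    have := mul_nonneg hα0 hq.1.le
    have := mul_pos hβ0 (inv_pos.2 hq.1)
    linarith
  set K := β⁻¹ * √xmax with hK
  have hDinv : ∀ᵐ q ∂μ, |(α * √q.1 + β * (√q.1)⁻¹)⁻¹| ≤ K := by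
    filter_upwards [hD, hD0] with q hq hq0
    rw [abs_of_pos (inv_pos.2 hq0), hK]
    have hx : 0 < √xmax := lt_of_lt_of_le hq.1 hq.2.1
    have := inv_anti₀ (by positivity) hq.2.2.2
    rwa [mul_inv, inv_inv] at this
  let p : ℝ × ℝ → ℝ := fun q => √ψ * (α * √q.1 + β * (√q.1)⁻¹)⁻¹
  let r : ℝ × ℝ → ℝ := fun q => A * q.2 * (α * √q.1 + β * (√q.1)⁻¹)⁻¹
  have hp : MemLp p 2 μ := by
    refine MemLp.of_le_mul (c := K) (memLp_const (√ψ)) (by fun_prop) ?_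
    filter_upwards [hDinv] with q hq
    simp only [p, Real.norm_eq_abs, abs_mul]
    rw [mul_comm]
    exact mul_le_mul_of_nonneg_right hq (abs_nonneg _)
  have hr : MemLp r 2 μ := by
    refine MemLp.of_le_mul (c := K) (hw.const_mul A) (by fun_prop) ?_
    filter_upwards [hDinv] with q hq
    simp only [r, Real.norm_eq_abs, abs_mul]
    rw [mul_comm]
    exact mul_le_mul_of_nonneg_right hq (by positivity)
  have hsq : ∀ {u : ℝ × ℝ → ℝ}, Measurable u → MemLp u 2 μ →
      MemLp (fun q => √q.1 * u q) 2 μ := by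
    intro u hum hu
    refine MemLp.of_le_mul (c := √xmax) hu (by fun_prop) ?_
    filter_upwards [hD] with q hq
    simp only [Real.norm_eq_abs, abs_mul, abs_of_pos hq.1]
    exact mul_le_mul_of_nonneg_right hq.2.1 (abs_nonneg _)
  have hP := hsq (u := p) (by fun_prop) hp
  have hR := hsq (u := r) (by fun_prop) hr
  refine ⟨p, r, ⟨hp, hr, hP, hR, ?_, ?_, ?_⟩, ?_⟩
  · rw [eq_comm, neg_eq_iff_eq_neg, h1]
    refine integral_congr_ae (Eventually.of_forall fun q => ?_)
    simp only [r]
    rw [div_eq_mul_inv]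
    ring
  · rw [h2, ← integral_add (int_mul hP hP) (int_mul hR hR)]
    refine integral_congr_ae ?_
    filter_upwards [hD] with q hq
    simp only [p, r]
    conv_lhs => rw [← hee, ← hq.2.2.1]
    rw [Real.sqrt_mul_self hq.1.le, div_eq_mul_inv, ← inv_pow]
    ring
  · rw [h3, ← integral_add (int_mul hp hp) (int_mul hr hr)]
    refine integral_congr_ae (Eventually.of_forall fun q => ?_)
    simp only [p, r]
    conv_lhs => rw [div_eq_mul_inv, ← inv_pow, ← hee]
    ring
  · filter_upwards [hD, hD0] with q hq hq0
    have key : (α * √q.1 + β * (√q.1)⁻¹)⁻¹ * (α * q.1 + β) = √q.1 := by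
      have h : α * q.1 + β = (α * √q.1 + β * (√q.1)⁻¹) * √q.1 := by
        rw [add_mul, mul_assoc α, hq.2.2.1, mul_assoc β, inv_mul_cancel₀ hq.1.ne', mul_one]
      rw [h, ← mul_assoc, inv_mul_cancel₀ hq0.ne', one_mul]
    simp only [p, r]
    constructor
    · rw [mul_assoc, key]
    · rw [mul_assoc (A * q.2), key]

/-- Stationarity of `h` tested against `h'`. -/
lemma station {μ : Measure (ℝ × ℝ)} {xmin xmax : ℝ} (hxmin : 0 < xmin) (hsupp : ∀ᵐ q ∂μ, q.1 ∈ Set.Icc xmin xmax) (hw2 : ∫ q, q.2 ^ 2 ∂μ = 1)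
    {e A α β c₁ c₂ c₁' c₂' : ℝ} {p r p' r' : ℝ × ℝ → ℝ}
    (H : HData μ c₁ c₂ p r) (H' : HData μ c₁' c₂' p' r')
    (hst : ∀ᵐ q ∂μ, e * √q.1 = p q * (α * q.1 + β) ∧ A * q.2 * √q.1 = r q * (α * q.1 + β)) :
    e * ∫ q, √q.1 * p' q ∂μ
      = α * ((∫ q, (√q.1 * p q) * (√q.1 * p' q) ∂μ) + ∫ q, (√q.1 * r q) * (√q.1 * r' q) ∂μ)
      + β * ((∫ q, p q * p' q ∂μ) + ∫ q, r q * r' q ∂μ) + c₁' * A := by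
  have hx : ∀ᵐ q ∂μ, √q.1 * √q.1 = q.1 := by
    filter_upwards [hsupp] with q hq
    exact Real.mul_self_sqrt (hxmin.le.trans hq.1)
  have k1 : e * ∫ q, √q.1 * p' q ∂μ = α * (∫ q, (√q.1 * p q) * (√q.1 * p' q) ∂μ)
      + β * (∫ q, p q * p' q ∂μ) := by
    rw [← integral_const_mul, ← integral_const_mul, ← integral_const_mul,
      ← integral_add ((int_mul H.hP H'.hP).const_mul _) ((int_mul H.hp H'.hp).const_mul _)]
    refine integral_congr_ae ?_
    filter_upwards [hx, hst] with q hq h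
    rw [← mul_assoc, h.1]
    linear_combination (- α * p q * p' q) * hq
  have k2 : A * ∫ q, (√q.1 * r' q) * q.2 ∂μ = α * (∫ q, (√q.1 * r q) * (√q.1 * r' q) ∂μ)
      + β * (∫ q, r q * r' q ∂μ) := by
    rw [← integral_const_mul, ← integral_const_mul, ← integral_const_mul,
      ← integral_add ((int_mul H.hR H'.hR).const_mul _) ((int_mul H.hr H'.hr).const_mul _)]
    refine integral_congr_ae ?_
    filter_upwards [hx, hst] with q hq h
    linear_combination (- α * r q * r' q) * hq + r' q * h.2
  have k3 := H'.e1
  rw [k1]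
  linear_combination k2 - A * k3

lemma K_le {μ : Measure (ℝ × ℝ)}
    {c₁ c₂ c₁' c₂' : ℝ} {p r p' r' : ℝ × ℝ → ℝ}
    (H : HData μ c₁ c₂ p r) (H' : HData μ c₁' c₂' p' r') :
    (∫ q, p q * p' q ∂μ) + ∫ q, r q * r' q ∂μ ≤ 1 := by
  linarith [amgm H.hp H'.hp, amgm H.hr H'.hr, H.e3, H'.e3]

/-- Bilinear expansion. -/
lemma expand {μ : Measure (ℝ × ℝ)}
    {u u' w : ℝ × ℝ → ℝ} (hu : MemLp u 2 μ) (hu' : MemLp u' 2 μ) (hw : MemLp w 2 μ)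
    (a b a' b' : ℝ) :
    ∫ q, (a * u q + b * w q) * (a' * u' q + b' * w q) ∂μ
      = a * a' * (∫ q, u q * u' q ∂μ) + a * b' * (∫ q, u q * w q ∂μ)
        + b * a' * (∫ q, u' q * w q ∂μ) + b * b' * (∫ q, w q * w q ∂μ) := by
  have i1 : Integrable (fun q => a * a' * (u q * u' q)) μ := (int_mul hu hu').const_mul _
  have i2 : Integrable (fun q => a * b' * (u q * w q)) μ := (int_mul hu hw).const_mul _
  have i3 : Integrable (fun q => b * a' * (u' q * w q)) μ := (int_mul hu' hw).const_mul _
  have i4 : Integrable (fun q => b * b' * (w q * w q)) μ := (int_mul hw hw).const_mul _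
  have i12 : Integrable (fun q => a * a' * (u q * u' q) + a * b' * (u q * w q)) μ := i1.add i2
  have i123 : Integrable (fun q => a * a' * (u q * u' q) + a * b' * (u q * w q)
    + b * a' * (u' q * w q)) μ := i12.add i3
  rw [← integral_const_mul, ← integral_const_mul, ← integral_const_mul, ← integral_const_mul,
    ← integral_add i1 i2, ← integral_add i12 i3, ← integral_add i123 i4]
  congr 1
  ext q
  ring

lemma S_le {μ : Measure (ℝ × ℝ)} (hw2 : ∫ q, q.2 ^ 2 ∂μ = 1)
    {c₁ c₂ c₁' c₂' : ℝ} {p r p' r' : ℝ × ℝ → ℝ} (hc₂ : 0 < c₂) (hc₂' : 0 < c₂')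
    (H : HData μ c₁ c₂ p r) (H' : HData μ c₁' c₂' p' r') :
    (∫ q, (√q.1 * p q) * (√q.1 * p' q) ∂μ) + ∫ q, (√q.1 * r q) * (√q.1 * r' q) ∂μ
      ≤ c₁ * c₁' + c₂ * c₂' := by
  have hw := memLp_w hw2
  have hww : ∫ q, q.2 * q.2 ∂μ = 1 := by simpa only [← pow_two] using hw2
  have m1 := amgm (H.hP.const_mul c₂') (H'.hP.const_mul c₂)
  have m2 := amgm ((H.hR.const_mul c₂').add (hw.const_mul (c₂' * c₁)))
    ((H'.hR.const_mul c₂).add (hw.const_mul (c₂ * c₁')))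
  simp only [Pi.add_apply] at m2
  rw [expand H.hR H'.hR hw, expand H.hR H.hR hw, expand H'.hR H'.hR hw, hww] at m2
  have x1 : ∀ (a b : ℝ) (u v : ℝ × ℝ → ℝ), ∫ q, (a * u q) * (b * v q) ∂μ
      = a * b * ∫ q, u q * v q ∂μ := by
    intro a b u v
    rw [← integral_const_mul]; congr 1; ext q; ring
  rw [x1 c₂' c₂ (fun q => √q.1 * p q) (fun q => √q.1 * p' q),
    x1 c₂' c₂' (fun q => √q.1 * p q) (fun q => √q.1 * p q),
    x1 c₂ c₂ (fun q => √q.1 * p' q) (fun q => √q.1 * p' q)] at m1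
  have e1 : ∫ q, (√q.1 * r q) * q.2 ∂μ = -c₁ := by linarith [H.e1]
  have e1' : ∫ q, (√q.1 * r' q) * q.2 ∂μ = -c₁' := by linarith [H'.e1]
  rw [e1, e1'] at m2
  have e2 := H.e2
  have e2' := H'.e2
  set PP := ∫ q, (√q.1 * p q) * (√q.1 * p q) ∂μ
  set RR := ∫ q, (√q.1 * r q) * (√q.1 * r q) ∂μ
  set PP' := ∫ q, (√q.1 * p' q) * (√q.1 * p' q) ∂μ
  set RR' := ∫ q, (√q.1 * r' q) * (√q.1 * r' q) ∂μ
  set PQ := ∫ q, (√q.1 * p q) * (√q.1 * p' q) ∂μ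
  set RQ := ∫ q, (√q.1 * r q) * (√q.1 * r' q) ∂μ
  have hpos : 0 < c₂ * c₂' := mul_pos hc₂ hc₂'
  have hRR : RR = c₁ ^ 2 + c₂ ^ 2 - PP := by linarith
  have hRR' : RR' = c₁' ^ 2 + c₂' ^ 2 - PP' := by linarith
  rw [hRR, hRR'] at m2
  refine le_of_mul_le_mul_left (a := 2 * (c₂ * c₂')) ?_ (by linarith)
  nlinarith

lemma c_bound {μ : Measure (ℝ × ℝ)} {xmin xmax : ℝ} (hsupp : ∀ᵐ q ∂μ, q.1 ∈ Set.Icc xmin xmax)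
    [IsProbabilityMeasure μ] {c₁ c₂ : ℝ} {p r : ℝ × ℝ → ℝ} (hx0 : 0 < xmin)
    (H : HData μ c₁ c₂ p r) :
    c₁ ^ 2 + c₂ ^ 2 ≤ xmax ∧ ∫ q, √q.1 * p q ∂μ ≤ (xmax + 1) / 2 := by
  have hx : ∀ᵐ q ∂μ, √q.1 * √q.1 = q.1 ∧ q.1 ≤ xmax ∧ 0 ≤ √q.1 := by
    filter_upwards [hsupp] with q hq
    exact ⟨Real.mul_self_sqrt (hx0.le.trans hq.1), hq.2, Real.sqrt_nonneg _⟩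
  have b : ∀ {u : ℝ × ℝ → ℝ}, MemLp u 2 μ → MemLp (fun q => √q.1 * u q) 2 μ →
      ∫ q, (√q.1 * u q) * (√q.1 * u q) ∂μ ≤ xmax * ∫ q, u q * u q ∂μ := by
    intro u hu hU
    rw [← integral_const_mul]
    refine integral_mono_ae (int_mul hU hU) ((int_mul hu hu).const_mul _) ?_
    filter_upwards [hx] with q hq
    have : √q.1 * u q * (√q.1 * u q) = q.1 * (u q * u q) := by
      conv_rhs => rw [← hq.1]
      ring
    rw [this]
    exact mul_le_mul_of_nonneg_right hq.2.1 (mul_self_nonneg _)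
  constructor
  · have := b H.hp H.hP
    have := b H.hr H.hR
    have h3 := H.e3
    calc c₁ ^ 2 + c₂ ^ 2 ≤ xmax * (∫ q, p q * p q ∂μ) + xmax * (∫ q, r q * r q ∂μ) := by
          linarith [H.e2]
      _ = xmax * 1 := by rw [h3]; ring
      _ = xmax := mul_one _
  · have hle : ∫ q, √q.1 * p q ∂μ ≤ ∫ q, (2⁻¹ * (p q * p q) + xmax / 2) ∂μ := by
      refine integral_mono_ae (H.hP.integrable (by norm_num))
        (((int_mul H.hp H.hp).const_mul _).add (integrable_const _)) ?_
      filter_upwards [hx] with q hq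
      nlinarith [sq_nonneg (√q.1 - p q)]
    rw [integral_add ((int_mul H.hp H.hp).const_mul _) (integrable_const _),
      integral_const_mul] at hle
    have : 0 ≤ ∫ q, r q * r q ∂μ := integral_nonneg fun q => mul_self_nonneg _
    have h3 := H.e3
    simp at hle
    linarith


/-- Everything we need about a solution of the system at `κ`. -/
lemma sol_facts {f : ℝ → ℝ} (hf : Continuous f) (hf01 : ∀ x, f x ∈ Set.Icc (0:ℝ) 1)
    {μ : Measure (ℝ × ℝ)} [IsProbabilityMeasure μ] {xmin xmax : ℝ} (hxmin : 0 < xmin)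
    (hsupp : ∀ᵐ q ∂μ, q.1 ∈ Set.Icc xmin xmax) (hw2 : ∫ q, q.2 ^ 2 ∂μ = 1)
    {ψ : ℝ} (hψ : 0 < ψ) {κ c₁ c₂ s : ℝ} (hκ : 0 < κ) (hc₂ : 0 < c₂) (hs : 0 < s)
    (h : SolSysMu f μ ψ κ c₁ c₂ s) :
    ∃ p r : ℝ × ℝ → ℝ, HData μ c₁ c₂ p r ∧
      √ψ * Tval f ψ κ c₁ c₂ s = Fk f κ c₁ c₂ - √ψ * ∫ q, √q.1 * p q ∂μ ∧
      ∀ (c₁' c₂' : ℝ) (p' r' : ℝ × ℝ → ℝ), 0 < c₂' → HData μ c₁' c₂' p' r' →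
        √ψ * Tval f ψ κ c₁ c₂ s ≤ Fk f κ c₁' c₂' - √ψ * ∫ q, √q.1 * p' q ∂μ := by
  obtain ⟨h1, h2, h3⟩ := h
  have hF₂ := d2F_nonneg hf hf01 hκ c₁ hc₂
  obtain ⟨p, r, H, hst⟩ := exists_data hxmin hsupp hw2 hψ hc₂ hs hF₂ h1 h2 h3
  have he : 0 < √ψ := Real.sqrt_pos.2 hψ
  have hst0 := station hxmin hsupp hw2 H H hst
  rw [← H.e2, ← H.e3] at hst0
  have hcc : c₂⁻¹ * d2F f κ c₁ c₂ * c₂ = d2F f κ c₁ c₂ := by field_simp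
  have hα0 : 0 ≤ c₂⁻¹ * d2F f κ c₁ c₂ := by positivity
  have hβ0 : 0 ≤ √ψ * s := by positivity
  have hT : √ψ * Tval f ψ κ c₁ c₂ s = Fk f κ c₁ c₂ - √ψ * ∫ q, √q.1 * p q ∂μ := by
    unfold Tval
    rw [hst0, mul_sub, ← mul_assoc, mul_inv_cancel₀ he.ne']
    linear_combination c₂ * hcc
  refine ⟨p, r, H, hT, fun c₁' c₂' p' r' hc₂' H' => ?_⟩
  have hst1 := station hxmin hsupp hw2 H H' hst
  have hS := mul_le_mul_of_nonneg_left (S_le hw2 hc₂ hc₂' H H') hα0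
  have hK := mul_le_mul_of_nonneg_left (K_le H H') hβ0
  have hg := Fk_grad hf hf01 hκ c₁ c₂ c₁' c₂'
  rw [hT, hst0, hst1]
  have hx1 : d2F f κ c₁ c₂ * (c₂' - c₂) = c₂⁻¹ * d2F f κ c₁ c₂ * c₂ * (c₂' - c₂) := by rw [hcc]
  rw [hx1] at hg
  set α := c₂⁻¹ * d2F f κ c₁ c₂ with hα
  have hA : d1F f κ c₁ c₂ - c₁ * c₂⁻¹ * d2F f κ c₁ c₂ = d1F f κ c₁ c₂ - c₁ * α := by
    rw [hα]; ring
  rw [hA]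
  nlinarith

/-- For fixed `ψ > 0`, the map `κ ↦ T(ψ,κ)` is strictly increasing on
`{κ > 0 : ψ > ψ↓(κ)}`, and `T(ψ,κ) → ∞` as `κ → ∞` (along that domain). -/
theorem statement_9 (f : ℝ → ℝ) (hf : Continuous f) (hf01 : ∀ x, f x ∈ Set.Icc (0:ℝ) 1)
    (ρ : ℝ) (hρ : 0 < ρ) (hnd : NonDeg (fun x => f (ρ * x)))
    (μ : Measure (ℝ × ℝ)) [IsProbabilityMeasure μ]
    (xmin xmax : ℝ) (hxmin : 0 < xmin) (hxx : xmin ≤ xmax)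
    (hsupp : ∀ᵐ q ∂μ, q.1 ∈ Set.Icc xmin xmax)
    (hw2 : ∫ q, q.2 ^ 2 ∂μ = 1)
    (ψ : ℝ) (hψ : 0 < ψ)
    (sol : ℝ → ℝ × ℝ × ℝ)
    (hsol : ∀ κ : ℝ, 0 < κ → psiDown (fun x => f (ρ * x)) μ κ < ψ →
      0 < (sol κ).2.1 ∧ 0 < (sol κ).2.2
        ∧ SolSysMu (fun x => f (ρ * x)) μ ψ κ (sol κ).1 (sol κ).2.1 (sol κ).2.2
        ∧ ∀ c₁ c₂ s : ℝ, 0 < c₂ → 0 < s →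
            SolSysMu (fun x => f (ρ * x)) μ ψ κ c₁ c₂ s → (c₁, c₂, s) = sol κ) :
    StrictMonoOn (fun κ : ℝ =>
        Tval (fun x => f (ρ * x)) ψ κ (sol κ).1 (sol κ).2.1 (sol κ).2.2)
      {κ : ℝ | 0 < κ ∧ psiDown (fun x => f (ρ * x)) μ κ < ψ}
    ∧ Tendsto (fun κ : ℝ =>
        Tval (fun x => f (ρ * x)) ψ κ (sol κ).1 (sol κ).2.1 (sol κ).2.2)
      (atTop ⊓ Filter.principal {κ : ℝ | 0 < κ ∧ psiDown (fun x => f (ρ * x)) μ κ < ψ})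
      atTop := by
  have hf' : Continuous (fun x => f (ρ * x)) := by fun_prop
  have hf01' : ∀ x, f (ρ * x) ∈ Set.Icc (0:ℝ) 1 := fun x => hf01 _
  have he : 0 < √ψ := Real.sqrt_pos.2 hψ
  refine ⟨?_, ?_⟩
  · rintro κ ⟨hκ, hκψ⟩ κ' ⟨hκ', hκψ'⟩ hlt
    obtain ⟨a1, a2, a3, -⟩ := hsol κ hκ hκψ
    obtain ⟨b1, b2, b3, -⟩ := hsol κ' hκ' hκψ'
    obtain ⟨p, r, H, hT, hmin⟩ := sol_facts hf' hf01' hxmin hsupp hw2 hψ hκ a1 a2 a3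
    obtain ⟨p', r', H', hT', -⟩ := sol_facts hf' hf01' hxmin hsupp hw2 hψ hκ' b1 b2 b3
    have h1 := hmin _ _ p' r' b1 H'
    have h2 := Fk_strict hf' hf01' hκ hlt (sol κ').1 (sol κ').2.1
    refine lt_of_mul_lt_mul_left (a := √ψ) ?_ he.le
    linarith
  · obtain ⟨m₁, m₂, hm⟩ := Fk_lower hf' hf01'
    have hlim : Tendsto (fun κ : ℝ => (√ψ)⁻¹ *
        (κ + (-(xmax + m₁ ^ 2 + m₂ ^ 2) - √ψ * ((xmax + 1) / 2)))) atTop atTop :=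
      (tendsto_atTop_add_const_right _ _ tendsto_id).const_mul_atTop (inv_pos.2 he)
    refine tendsto_atTop_mono' _ ?_ (hlim.mono_left inf_le_left)
    refine Filter.eventually_inf_principal.2 (Eventually.of_forall ?_)
    rintro κ ⟨hκ, hκψ⟩
    obtain ⟨a1, a2, a3, -⟩ := hsol κ hκ hκψ
    obtain ⟨p, r, H, hT, -⟩ := sol_facts hf' hf01' hxmin hsupp hw2 hψ hκ a1 a2 a3
    obtain ⟨hc, hJ⟩ := c_bound hsupp hxmin H
    have hJ' := mul_le_mul_of_nonneg_left hJ he.le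
    have hF := hm κ (sol κ).1 (sol κ).2.1
    rw [inv_mul_le_iff₀ he, hT]
    nlinarith [sq_nonneg ((sol κ).1 - m₁), sq_nonneg ((sol κ).2.1 - m₂), sq_nonneg (sol κ).1,
      sq_nonneg (sol κ).2.1, sq_nonneg m₁, sq_nonneg m₂]

end MaxMargin
end
end

section
/- For every t ∈ ℝ and every nonempty compact set Θ ⊆ ℝ^p the following inequalities hold: P(ξ⁽⁰⁾ ≤ t) ≤ 2·P(ξ⁽¹⁾ ≤ t), P(ξ⁽⁰⁾ ≥ t) ≤ 2·P(ξ⁽¹⁾ ≥ t), and P(ξ⁽⁰⁾(Θ) ≤ t) ≤ 2·P(ξ⁽¹⁾(Θ) ≤ t). Moreover, if Θ is in addition convex, then also P(ξ⁽⁰⁾(Θ) ≥ t) ≤ 2·P(ξ⁽¹⁾(Θ) ≥ t). -/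
open MeasureTheory ProbabilityTheory Real Filter Set Topology

noncomputable section

namespace MaxMargin

/-- The Euclidean (ℓ²) norm of a finitely-indexed vector. -/
def l2 {ι : Type*} [Fintype ι] (v : ι → ℝ) : ℝ := Real.sqrt (∑ i, v i ^ 2)

/-- Standard Gaussian measure on `ι → ℝ`. -/
def stdGaussianPi (ι : Type*) [Fintype ι] : Measure (ι → ℝ) :=
  Measure.pi fun _ : ι => stdG

/-- The law of a `{+1,−1}`-valued variable taking the value `+1` with probability `q`. -/
def signBer (q : ℝ) : Measure ℝ :=
  ENNReal.ofReal q • Measure.dirac (1 : ℝ) + ENNReal.ofReal (1 - q) • Measure.dirac (-1 : ℝ)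

/-- Projection of `v` orthogonal to the unit vector `w`: `Π_{w⊥}v = v − ⟨w,v⟩w`. -/
def projv {ι : Type*} [Fintype ι] (w v : ι → ℝ) : ι → ℝ :=
  fun j => v j - (∑ k, w k * v k) * w j

/-- The dual feasible set `{λ : ‖λ‖₂ ≤ 1, yᵢλᵢ ≥ 0 ∀i}`. -/
def lamSet (n : ℕ) (yv : Fin n → ℝ) : Set (Fin n → ℝ) :=
  {lam : Fin n → ℝ | l2 lam ≤ 1 ∧ ∀ i, 0 ≤ yv i * lam i}

/-- `ξ⁽⁰⁾(Θ)` evaluated at the data `(M, y)`: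
`min_{θ∈Θ} max_{‖λ‖≤1, y⊙λ≥0} p^{−1/2}·λᵀ(κy − X̄Λ^{1/2}θ)`. -/
def xi0 (n p : ℕ) (κ : ℝ) (Λ : Fin p → ℝ) (Θ : Set (Fin p → ℝ))
    (M : Fin n → Fin p → ℝ) (yv : Fin n → ℝ) : ℝ :=
  sInf ((fun θ => sSup ((fun lam => (Real.sqrt (p : ℝ))⁻¹ *
      ∑ i, lam i * (κ * yv i - ∑ j, M i j * Real.sqrt (Λ j) * θ j)) '' lamSet n yv)) '' Θ)

/-- `ξ⁽¹⁾(Θ)` evaluated at `(g, h, u, y)`: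
`min_{θ∈Θ} max_{‖λ‖≤1, y⊙λ≥0} p^{−1/2}( λᵀ(κy − ⟨Λ^{1/2}w,θ⟩u − ‖Π_{w⊥}Λ^{1/2}θ‖₂h)
+ ‖λ‖₂·gᵀΠ_{w⊥}Λ^{1/2}θ )`. -/
def xi1 (n p : ℕ) (κ : ℝ) (Λ w : Fin p → ℝ) (Θ : Set (Fin p → ℝ))
    (g : Fin p → ℝ) (h u yv : Fin n → ℝ) : ℝ :=
  sInf ((fun θ => sSup ((fun lam => (Real.sqrt (p : ℝ))⁻¹ *
      ((∑ i, lam i * (κ * yv i - (∑ j, Real.sqrt (Λ j) * w j * θ j) * u i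
          - l2 (projv w (fun j => Real.sqrt (Λ j) * θ j)) * h i))
        + l2 lam * ∑ j, g j * projv w (fun j' => Real.sqrt (Λ j') * θ j') j))
      '' lamSet n yv)) '' Θ)

/-- Joint law of `(X̄, y)` in the primary model: `X̄` has i.i.d. `N(0,1)` entries and,
conditionally on `X̄`, the labels are independent with `P(yᵢ = +1 | X̄) = f(ρ⟨w, x̄ᵢ⟩)`. -/
def mu0 (n p : ℕ) (f : ℝ → ℝ) (ρ : ℝ) (w : Fin p → ℝ) :
    Measure ((Fin n → Fin p → ℝ) × (Fin n → ℝ)) :=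
  (Measure.pi fun _ : Fin n => stdGaussianPi (Fin p)).bind fun M =>
    (Measure.pi fun i : Fin n => signBer (f (ρ * ∑ j, w j * M i j))).map fun yv => (M, yv)

/-- Joint law of `(g, h, u, y)` in the auxiliary model: `g, h, u` independent standard
Gaussians and, conditionally on `u`, the labels are independent with
`P(yᵢ = +1 | u) = f(ρ·uᵢ)`. -/
def mu1 (n p : ℕ) (f : ℝ → ℝ) (ρ : ℝ) :
    Measure ((Fin p → ℝ) × (Fin n → ℝ) × (Fin n → ℝ) × (Fin n → ℝ)) :=
  ((stdGaussianPi (Fin p)).prod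
      ((stdGaussianPi (Fin n)).prod (stdGaussianPi (Fin n)))).bind fun ghu =>
    (Measure.pi fun i : Fin n => signBer (f (ρ * ghu.2.2 i))).map fun yv =>
      (ghu.1, ghu.2.1, ghu.2.2, yv)


/-! ### One-dimensional Gaussian integration by parts -/

lemma hasDerivAt_pdf (s : ℝ) :
    HasDerivAt (gaussianPDFReal 0 1) (-(s * gaussianPDFReal 0 1 s)) s := by
  have h1 : HasDerivAt (fun x : ℝ => -(x - 0) ^ 2 / (2 * ((1 : NNReal) : ℝ))) (-s) s := by
    have := (((hasDerivAt_id s).sub_const 0).pow 2).neg.div_const (2 * ((1 : NNReal) : ℝ))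
    convert! this using 1
    simp only [NNReal.coe_one, id]
    ring
  have h2 := (h1.exp).const_mul ((√(2 * π * ((1 : NNReal) : ℝ)))⁻¹)
  have h3 : gaussianPDFReal 0 1 = fun x : ℝ => (√(2 * π * ((1 : NNReal) : ℝ)))⁻¹ *
      Real.exp (-(x - 0) ^ 2 / (2 * ((1 : NNReal) : ℝ))) := rfl
  rw [h3]
  convert! h2 using 1
  ring

instance instProbStdG : IsProbabilityMeasure stdG := by unfold stdG; infer_instance

instance instProbStdGaussianPi (ι : Type*) [Fintype ι] :
    IsProbabilityMeasure (stdGaussianPi ι) := by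
  unfold stdGaussianPi; infer_instance

lemma integrable_id_stdG : Integrable (fun s : ℝ => s) stdG := by
  have := (memLp_id_gaussianReal (μ := 0) (v := 1) 1)
  simp only [ENNReal.coe_one] at this
  exact memLp_one_iff_integrable.1 this

lemma integral_stdG (G : ℝ → ℝ) : ∫ s, G s ∂stdG = ∫ s, gaussianPDFReal 0 1 s * G s := by
  unfold stdG
  rw [integral_gaussianReal_eq_integral_smul (by simp)]
  simp

lemma integrable_stdG {G : ℝ → ℝ} (h : Integrable G stdG) :
    Integrable (fun s => gaussianPDFReal 0 1 s * G s) := by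
  unfold stdG at h
  rw [gaussianReal_of_var_ne_zero _ (by simp),
    integrable_withDensity_iff_integrable_smul' (by fun_prop) (by simp [gaussianPDF])] at h
  convert! h using 2 with s
  simp [gaussianPDF, gaussianPDFReal_nonneg]

lemma stein1 (G G' : ℝ → ℝ) (C : ℝ) (hd : ∀ s, HasDerivAt G (G' s) s) (hG : ∀ s, |G s| ≤ C)
    (hG' : ∀ s, |G' s| ≤ C) (hm : Measurable G') :
    ∫ s, s * G s ∂stdG = ∫ s, G' s ∂stdG := by
  have hGm : Measurable G :=
    (continuous_iff_continuousAt.2 fun s => (hd s).continuousAt).measurable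
  have i1 : Integrable (fun s => s * G s) stdG := by
    refine integrable_id_stdG.mul_bdd (c := C) hGm.aestronglyMeasurable ?_
    exact ae_of_all _ hG
  have i2 : Integrable G' stdG := Integrable.of_bound hm.aestronglyMeasurable C (ae_of_all _ hG')
  have i3 : Integrable G stdG := Integrable.of_bound hGm.aestronglyMeasurable C (ae_of_all _ hG)
  rw [integral_stdG, integral_stdG]
  have := integral_mul_deriv_eq_deriv_mul_of_integrable (u := G) (v := gaussianPDFReal 0 1)
    (u' := G') (v' := fun s => -(s * gaussianPDFReal 0 1 s)) (fun x _ => hd x)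
    (fun x _ => hasDerivAt_pdf x) ?_ ?_ ?_
  · have h2 : ∀ s, G s * -(s * gaussianPDFReal 0 1 s) = - (gaussianPDFReal 0 1 s * (s * G s)) := by
      intro s; ring
    simp only [h2, integral_neg, neg_inj] at this
    rw [this]
    simp only [mul_comm]
  · convert! (integrable_stdG i1).neg using 1
    ext s; simp; ring
  · convert! (integrable_stdG i2) using 1
    ext s; simp; ring
  · convert! (integrable_stdG i3) using 1
    ext s; simp; ring

/-! ### Resampling a coordinate -/

lemma resample {I : Type*} [Fintype I] [DecidableEq I] (k : I) :
    MeasurePreserving (fun q : (I → ℝ) × ℝ => Function.update q.1 k q.2)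
      ((stdGaussianPi I).prod stdG) (stdGaussianPi I) := by
  have hm : Measurable (fun q : (I → ℝ) × ℝ => Function.update q.1 k q.2) := by
    rw [measurable_pi_iff]
    intro a
    by_cases h : a = k
    · subst h; simp; fun_prop
    · simp [Function.update_of_ne h]; fun_prop
  refine ⟨hm, ?_⟩
  unfold stdGaussianPi
  symm
  apply Measure.pi_eq
  intro s hs
  rw [Measure.map_apply hm (MeasurableSet.univ_pi hs)]
  have : (fun q : (I → ℝ) × ℝ => Function.update q.1 k q.2) ⁻¹' (Set.univ.pi s)
      = (Set.univ.pi (Function.update s k Set.univ)) ×ˢ (s k) := by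
    ext q
    simp only [Set.mem_preimage, Set.mem_univ_pi, Set.mem_prod]
    constructor
    · intro h
      refine ⟨fun i => ?_, by simpa using h k⟩
      by_cases hi : i = k
      · subst hi; simp
      · simpa [Function.update_of_ne hi] using h i
    · rintro ⟨h1, h2⟩ i
      by_cases hi : i = k
      · subst hi; simpa using h2
      · simpa [Function.update_of_ne hi] using h1 i
  rw [this, Measure.prod_prod, Measure.pi_pi, ← Finset.mul_prod_erase Finset.univ _ (Finset.mem_univ k),
    ← Finset.mul_prod_erase Finset.univ (fun i => stdG (s i)) (Finset.mem_univ k)]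
  simp only [Function.update_self, measure_univ, one_mul]
  rw [mul_comm]
  congr 1
  apply Finset.prod_congr rfl
  intro i hi
  rw [Function.update_of_ne (Finset.ne_of_mem_erase hi)]

lemma integrable_coord {I : Type*} [Fintype I] (k : I) :
    Integrable (fun z : I → ℝ => z k) (stdGaussianPi I) := by
  have : MeasurePreserving (Function.eval k) (stdGaussianPi I) stdG :=
    measurePreserving_eval (fun _ : I => stdG) k
  exact this.integrable_comp_of_integrable integrable_id_stdG

/-- Multivariate Gaussian integration by parts. -/
lemma stein {I : Type*} [Fintype I] [DecidableEq I] (k : I) (G G' : (I → ℝ) → ℝ) (C : ℝ)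
    (hd : ∀ z s, HasDerivAt (fun s => G (Function.update z k s)) (G' (Function.update z k s)) s)
    (hG : ∀ z, |G z| ≤ C) (hG' : ∀ z, |G' z| ≤ C) (hGm : Measurable G) (hm : Measurable G') :
    ∫ z, z k * G z ∂(stdGaussianPi I) = ∫ z, G' z ∂(stdGaussianPi I) := by
  have i1 : Integrable (fun z => z k * G z) (stdGaussianPi I) :=
    (integrable_coord k).mul_bdd (c := C) hGm.aestronglyMeasurable (ae_of_all _ hG)
  have i2 : Integrable G' (stdGaussianPi I) :=
    Integrable.of_bound hm.aestronglyMeasurable C (ae_of_all _ hG')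
  have mp := resample k
  rw [← mp.map_eq] at i1 i2
  rw [← mp.map_eq, integral_map mp.aemeasurable i1.1, integral_map mp.aemeasurable i2.1]
  have j1 := (integrable_map_measure i1.1 mp.aemeasurable).1 i1
  have j2 := (integrable_map_measure i2.1 mp.aemeasurable).1 i2
  simp only [Function.comp_def] at j1 j2
  rw [integral_prod _ j1, integral_prod _ j2]
  congr 1
  ext z
  simp only [Function.update_self]
  exact stein1 _ _ C (hd z) (fun s => hG _) (fun s => hG' _)
    (hm.comp (measurable_update z))


/-! ### The smooth test function -/

section TestFunction

set_option linter.unusedSectionVars false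

variable {ι κ : Type*} [Fintype ι] [Fintype κ]

/-- Softplus. -/
def sp (x : ℝ) : ℝ := Real.log (1 + Real.exp x)

lemma hasDerivAt_sp (x : ℝ) : HasDerivAt sp (Real.sigmoid x) x := by
  have h1 : HasDerivAt (fun x : ℝ => 1 + Real.exp x) (Real.exp x) x :=
    (Real.hasDerivAt_exp x).const_add 1
  have h2 := h1.log (by positivity)
  convert! h2 using 1
  rw [Real.sigmoid_def, Real.exp_neg]
  field_simp
  ring

lemma sp_nonneg (x : ℝ) : 0 ≤ sp x := Real.log_nonneg (by linarith [Real.exp_pos x])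

lemma continuous_sp : Continuous sp :=
  continuous_iff_continuousAt.2 fun x => (hasDerivAt_sp x).continuousAt

/-- Soft version of the indicator that a row is negative. -/
def Pa (a : ι) (x : ι → κ → ℝ) : ℝ := Real.exp (-∑ b, sp (x a b))

/-- The test function. -/
def FF (K : ℝ) (x : ι → κ → ℝ) : ℝ := Real.exp (-(K * ∑ a, Pa a x))

/-- First partial derivatives of the test function. -/
def DD (K : ℝ) (a : ι) (b : κ) (x : ι → κ → ℝ) : ℝ :=
  FF K x * K * Pa a x * Real.sigmoid (x a b)

open Classical in
/-- Second partial derivatives of the test function. -/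
def HH (K : ℝ) (a : ι) (b : κ) (a' : ι) (b' : κ) (x : ι → κ → ℝ) : ℝ :=
  DD K a' b' x * K * Pa a x * Real.sigmoid (x a b)
  + (if a = a' then -(FF K x * K * Pa a x * Real.sigmoid (x a' b') * Real.sigmoid (x a b))
      + (if b = b' then FF K x * K * Pa a x * (Real.sigmoid (x a b) * (1 - Real.sigmoid (x a b)))
        else 0) else 0)

lemma Pa_pos (a : ι) (x : ι → κ → ℝ) : 0 < Pa a x := Real.exp_pos _

lemma Pa_le_one (a : ι) (x : ι → κ → ℝ) : Pa a x ≤ 1 := by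
  apply Real.exp_le_one_iff.2
  have := Finset.sum_nonneg (fun b (_ : b ∈ Finset.univ) => sp_nonneg (x a b))
  linarith

lemma FF_pos (K : ℝ) (x : ι → κ → ℝ) : 0 < FF K x := Real.exp_pos _

lemma FF_le_one {K : ℝ} (hK : 0 ≤ K) (x : ι → κ → ℝ) : FF K x ≤ 1 := by
  apply Real.exp_le_one_iff.2
  have := Finset.sum_nonneg (fun a (_ : a ∈ Finset.univ) => (Pa_pos a x).le)
  have := mul_nonneg hK this
  linarith

lemma DD_nonneg {K : ℝ} (hK : 0 ≤ K) (a : ι) (b : κ) (x : ι → κ → ℝ) : 0 ≤ DD K a b x := by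
  have := FF_pos K x
  have := Pa_pos a x
  have := Real.sigmoid_nonneg (x a b)
  unfold DD; positivity

lemma DD_le {K : ℝ} (hK : 0 ≤ K) (a : ι) (b : κ) (x : ι → κ → ℝ) : DD K a b x ≤ K := by
  have h1 := FF_pos K x
  have h2 := Pa_pos a x
  have h3 := Real.sigmoid_nonneg (x a b)
  calc DD K a b x ≤ 1 * K * 1 * 1 := by
        unfold DD
        gcongr
        · exact FF_le_one hK x
        · exact Pa_le_one a x
        · exact Real.sigmoid_le_one _
    _ = K := by ring

lemma HH_nonneg {K : ℝ} (hK : 0 ≤ K) {a a' : ι} (h : a ≠ a') (b b' : κ) (x : ι → κ → ℝ) :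
    0 ≤ HH K a b a' b' x := by
  unfold HH
  rw [if_neg h, add_zero]
  have := DD_nonneg hK a' b' x
  have := Pa_pos a x
  have := Real.sigmoid_nonneg (x a b)
  positivity

lemma HH_abs_le {K : ℝ} (hK : 0 ≤ K) (a a' : ι) (b b' : κ) (x : ι → κ → ℝ) :
    |HH K a b a' b' x| ≤ K * K + 2 * K := by
  have h1 := FF_pos K x
  have h2 := Pa_pos a x
  have h3 := Real.sigmoid_nonneg (x a b)
  have h3' := Real.sigmoid_le_one (x a b)
  have h4 := Real.sigmoid_nonneg (x a' b')
  have e1 : |DD K a' b' x * K * Pa a x * Real.sigmoid (x a b)| ≤ K * K := by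
    have h5 := DD_nonneg hK a' b' x
    rw [abs_of_nonneg (by positivity)]
    calc _ ≤ K * K * 1 * 1 := by
          gcongr
          · exact DD_le hK _ _ _
          · exact Pa_le_one a x
      _ = _ := by ring
  have e2 : |FF K x * K * Pa a x * Real.sigmoid (x a' b') * Real.sigmoid (x a b)| ≤ K := by
    rw [abs_of_nonneg (by positivity)]
    calc _ ≤ 1 * K * 1 * 1 * 1 := by
          gcongr
          · exact FF_le_one hK x
          · exact Pa_le_one a x
          · exact Real.sigmoid_le_one _
      _ = K := by ring
  have e3 : |FF K x * K * Pa a x * (Real.sigmoid (x a b) * (1 - Real.sigmoid (x a b)))| ≤ K := by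
    have h6 : 0 ≤ 1 - Real.sigmoid (x a b) := by linarith
    rw [abs_of_nonneg (by positivity)]
    calc _ ≤ 1 * K * 1 * (1 * 1) := by
          gcongr
          · exact FF_le_one hK x
          · exact Pa_le_one a x
          · linarith
      _ = K := by ring
  rw [abs_le] at *
  unfold HH
  split_ifs <;> constructor <;> linarith [e1.1, e1.2, e2.1, e2.2, e3.1, e3.2]

lemma continuous_Pa (a : ι) : Continuous (Pa (κ := κ) a) := by
  unfold Pa
  have := continuous_sp
  fun_prop

lemma continuous_FF (K : ℝ) : Continuous (FF (ι := ι) (κ := κ) K) := by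
  unfold FF
  have := fun a : ι => continuous_Pa (κ := κ) a
  fun_prop

lemma continuous_DD (K : ℝ) (a : ι) (b : κ) : Continuous (DD (ι := ι) (κ := κ) K a b) := by
  unfold DD
  have := continuous_Pa (κ := κ) a
  have := continuous_FF (κ := κ) (ι := ι) K
  have := continuous_sigmoid
  fun_prop

lemma continuous_HH (K : ℝ) (a : ι) (b : κ) (a' : ι) (b' : κ) :
    Continuous (HH (ι := ι) (κ := κ) K a b a' b') := by
  unfold HH
  have := continuous_Pa (κ := κ) a
  have := continuous_FF (κ := κ) (ι := ι) K
  have := continuous_DD (κ := κ) (ι := ι) K a' b'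
  have := continuous_sigmoid
  split_ifs <;> fun_prop

variable {x : ℝ → ι → κ → ℝ} {x' : ι → κ → ℝ} {τ : ℝ}

lemma hasDerivAt_Pa (hx : ∀ a b, HasDerivAt (fun τ => x τ a b) (x' a b) τ) (a : ι) :
    HasDerivAt (fun τ => Pa a (x τ)) (-(Pa a (x τ) * ∑ b, Real.sigmoid (x τ a b) * x' a b)) τ := by
  have h1 : HasDerivAt (fun τ => ∑ b, sp (x τ a b)) (∑ b, Real.sigmoid (x τ a b) * x' a b) τ :=
    HasDerivAt.fun_sum fun b _ => (hasDerivAt_sp _).comp τ (hx a b)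
  have := h1.neg.exp
  convert! this using 1
  simp [Pa]

lemma hasDerivAt_FF (K : ℝ) (hx : ∀ a b, HasDerivAt (fun τ => x τ a b) (x' a b) τ) :
    HasDerivAt (fun τ => FF K (x τ)) (∑ a, ∑ b, DD K a b (x τ) * x' a b) τ := by
  have h1 : HasDerivAt (fun τ => ∑ a, Pa a (x τ)) _ τ :=
    HasDerivAt.fun_sum fun a _ => hasDerivAt_Pa hx a
  have := (h1.const_mul K).neg.exp
  convert! this using 1
  simp only [DD, FF, Finset.mul_sum, Finset.sum_neg_distrib, mul_neg, neg_neg,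
    Pi.neg_apply]
  refine Finset.sum_congr rfl fun a _ => Finset.sum_congr rfl fun b _ => ?_
  ring

lemma hasDerivAt_DD (K : ℝ) (hx : ∀ a b, HasDerivAt (fun τ => x τ a b) (x' a b) τ)
    (a : ι) (b : κ) :
    HasDerivAt (fun τ => DD K a b (x τ)) (∑ a', ∑ b', HH K a b a' b' (x τ) * x' a' b') τ := by
  classical
  have h1 := hasDerivAt_FF K hx
  have h2 := hasDerivAt_Pa hx a
  have h3 : HasDerivAt (fun τ => Real.sigmoid (x τ a b))
    (Real.sigmoid (x τ a b) * (1 - Real.sigmoid (x τ a b)) * x' a b) τ :=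
    (hasDerivAt_sigmoid _).comp τ (hx a b)
  have := ((h1.mul_const K).mul h2).mul h3
  convert! this using 1
  have e1 : ∑ a', ∑ b', HH K a b a' b' (x τ) * x' a' b'
      = (∑ a', ∑ b', DD K a' b' (x τ) * x' a' b') * (K * Pa a (x τ) * Real.sigmoid (x τ a b))
      + (∑ a', ∑ b', if a = a' then
          -(FF K (x τ) * K * Pa a (x τ) * Real.sigmoid (x τ a' b') * Real.sigmoid (x τ a b))
            * x' a' b' else 0)
      + (∑ a', ∑ b', if a = a' then (if b = b' then FF K (x τ) * K * Pa a (x τ)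
          * (Real.sigmoid (x τ a b) * (1 - Real.sigmoid (x τ a b))) * x' a' b' else 0) else 0) := by
    simp only [Finset.sum_mul, ← Finset.sum_add_distrib]
    refine Finset.sum_congr rfl fun a' _ => Finset.sum_congr rfl fun b' _ => ?_
    unfold HH
    split_ifs <;> ring
  have e2 : (∑ a', ∑ b', if a = a' then
          -(FF K (x τ) * K * Pa a (x τ) * Real.sigmoid (x τ a' b') * Real.sigmoid (x τ a b))
            * x' a' b' else 0)
      = -(FF K (x τ) * K * Pa a (x τ) * Real.sigmoid (x τ a b)) *
        ∑ b', Real.sigmoid (x τ a b') * x' a b' := by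
    rw [Finset.sum_comm]
    simp only [Finset.sum_ite_eq, Finset.mem_univ, if_true, Finset.mul_sum]
    refine Finset.sum_congr rfl fun b' _ => ?_
    ring
  have e3 : (∑ a', ∑ b', if a = a' then (if b = b' then FF K (x τ) * K * Pa a (x τ)
          * (Real.sigmoid (x τ a b) * (1 - Real.sigmoid (x τ a b))) * x' a' b' else 0) else 0)
      = FF K (x τ) * K * Pa a (x τ)
          * (Real.sigmoid (x τ a b) * (1 - Real.sigmoid (x τ a b))) * x' a b := by
    rw [Finset.sum_comm]
    simp
  rw [e1, e2, e3]
  simp only [Pi.mul_apply]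
  ring

end TestFunction


/-! ### Gaussian interpolation -/

section Interp

set_option linter.unusedSectionVars false

variable {ι κ I : Type*} [Fintype ι] [Fintype κ] [Fintype I]

/-- The interpolation path. -/
def xx (A B : ι → κ → I → ℝ) (ψ : ι → κ → ℝ) (α : ℝ) (z : I → ℝ) : ι → κ → ℝ :=
  fun a b => ψ a b + ∑ k, (Real.sin α * A a b k + Real.cos α * B a b k) * z k

/-- The derivative of the interpolation path. -/
def xd (A B : ι → κ → I → ℝ) (α : ℝ) (z : I → ℝ) : ι → κ → ℝ :=
  fun a b => ∑ k, (Real.cos α * A a b k - Real.sin α * B a b k) * z k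

variable (A B : ι → κ → I → ℝ) (ψ : ι → κ → ℝ)

lemma continuous_xx (α : ℝ) : Continuous (xx A B ψ α) := by
  unfold xx; fun_prop

lemma hasDerivAt_xx (α : ℝ) (z : I → ℝ) (a : ι) (b : κ) :
    HasDerivAt (fun α => xx A B ψ α z a b) (xd A B α z a b) α := by
  unfold xx xd
  apply HasDerivAt.const_add
  apply HasDerivAt.fun_sum
  intro k _
  apply HasDerivAt.mul_const
  have := ((Real.hasDerivAt_sin α).mul_const (A a b k)).add
    ((Real.hasDerivAt_cos α).mul_const (B a b k))
  convert! this using 1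
  ring

lemma hasDerivAt_xx_update [DecidableEq I] (α : ℝ) (z : I → ℝ) (k : I) (s : ℝ) (a : ι) (b : κ) :
    HasDerivAt (fun s => xx A B ψ α (Function.update z k s) a b)
      (Real.sin α * A a b k + Real.cos α * B a b k) s := by
  unfold xx
  apply HasDerivAt.const_add
  have h1 : ∀ i ∈ Finset.univ, HasDerivAt
      (fun s => (Real.sin α * A a b i + Real.cos α * B a b i) * Function.update z k s i)
      (if i = k then (Real.sin α * A a b i + Real.cos α * B a b i) else 0) s := by
    intro i _
    by_cases h : i = k
    · subst h
      simpa using (hasDerivAt_id s).const_mul (Real.sin α * A a b i + Real.cos α * B a b i)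
    · simp only [Function.update_of_ne h, if_neg h]
      exact hasDerivAt_const _ _
  have := HasDerivAt.fun_sum h1
  simpa using this

lemma xd_bound (α : ℝ) (z : I → ℝ) (a : ι) (b : κ) :
    |xd A B α z a b| ≤ ∑ k, (|A a b k| + |B a b k|) * |z k| := by
  unfold xd
  refine (Finset.abs_sum_le_sum_abs _ _).trans (Finset.sum_le_sum fun k _ => ?_)
  rw [abs_mul]
  gcongr
  refine (abs_sub _ _).trans ?_
  rw [abs_mul, abs_mul]
  have h1 := Real.abs_cos_le_one α
  have h2 := Real.abs_sin_le_one α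
  have := abs_nonneg (A a b k)
  have := abs_nonneg (B a b k)
  nlinarith

lemma integrable_FF {K : ℝ} (hK : 0 ≤ K) (α : ℝ) :
    Integrable (fun z => FF K (xx A B ψ α z)) (stdGaussianPi I) := by
  refine Integrable.of_bound ((continuous_FF K).comp (continuous_xx A B ψ α)).aestronglyMeasurable 1
    (ae_of_all _ fun z => ?_)
  rw [Real.norm_of_nonneg (FF_pos _ _).le]
  exact FF_le_one hK _

lemma integrable_zDD {K : ℝ} (hK : 0 ≤ K) (α : ℝ) (a : ι) (b : κ) (k : I) :
    Integrable (fun z => z k * DD K a b (xx A B ψ α z)) (stdGaussianPi I) := by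
  refine (integrable_coord k).mul_bdd (c := K)
    ((continuous_DD K a b).comp (continuous_xx A B ψ α)).aestronglyMeasurable
    (ae_of_all _ fun z => ?_)
  rw [Real.norm_of_nonneg (DD_nonneg hK _ _ _)]
  exact DD_le hK _ _ _

lemma integrable_HH {K : ℝ} (hK : 0 ≤ K) (α : ℝ) (a a' : ι) (b b' : κ) :
    Integrable (fun z => HH K a b a' b' (xx A B ψ α z)) (stdGaussianPi I) := by
  refine Integrable.of_bound
    ((continuous_HH K a b a' b').comp (continuous_xx A B ψ α)).aestronglyMeasurable (K * K + 2 * K)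
    (ae_of_all _ fun z => ?_)
  exact HH_abs_le hK _ _ _ _ _

lemma hasDerivAt_phi {K : ℝ} (hK : 0 ≤ K) (α : ℝ) :
    HasDerivAt (fun α => ∫ z, FF K (xx A B ψ α z) ∂(stdGaussianPi I))
      (∫ z, ∑ a, ∑ b, DD K a b (xx A B ψ α z) * xd A B α z a b ∂(stdGaussianPi I)) α := by
  refine (hasDerivAt_integral_of_dominated_loc_of_deriv_le (s := Set.univ)
    (F := fun α z => FF K (xx A B ψ α z))
    (F' := fun α z => ∑ a, ∑ b, DD K a b (xx A B ψ α z) * xd A B α z a b)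
    (bound := fun z => ∑ a, ∑ b, K * ∑ k, (|A a b k| + |B a b k|) * |z k|) Filter.univ_mem
    (Eventually.of_forall fun α => (integrable_FF A B ψ hK α).1) (integrable_FF A B ψ hK α)
    ?_ ?_ ?_ ?_).2
  · refine Continuous.aestronglyMeasurable ?_
    have h1 := fun a b => continuous_DD (ι := ι) (κ := κ) K a b
    have h2 := continuous_xx A B ψ α
    unfold xd
    fun_prop
  · refine ae_of_all _ fun z β _ => ?_
    rw [Real.norm_eq_abs]
    refine (Finset.abs_sum_le_sum_abs _ _).trans (Finset.sum_le_sum fun a _ => ?_)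
    refine (Finset.abs_sum_le_sum_abs _ _).trans (Finset.sum_le_sum fun b _ => ?_)
    rw [abs_mul, abs_of_nonneg (DD_nonneg hK _ _ _)]
    exact mul_le_mul (DD_le hK _ _ _) (xd_bound A B β z a b) (abs_nonneg _) hK
  · refine integrable_finsetSum _ fun a _ => integrable_finsetSum _ fun b _ => ?_
    refine Integrable.const_mul ?_ _
    refine integrable_finsetSum _ fun k _ => ?_
    exact (integrable_coord k).abs.const_mul _
  · refine ae_of_all _ fun z β _ => ?_
    exact hasDerivAt_FF K (fun a b => hasDerivAt_xx A B ψ β z a b)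

lemma stein_DD {K : ℝ} (hK : 0 ≤ K) (α : ℝ) (a : ι) (b : κ) (k : I) :
    ∫ z, z k * DD K a b (xx A B ψ α z) ∂(stdGaussianPi I)
      = ∑ a', ∑ b', (Real.sin α * A a' b' k + Real.cos α * B a' b' k) *
        ∫ z, HH K a b a' b' (xx A B ψ α z) ∂(stdGaussianPi I) := by
  classical
  have hb : ∀ z, |∑ a', ∑ b', HH K a b a' b' (xx A B ψ α z) *
      (Real.sin α * A a' b' k + Real.cos α * B a' b' k)|
      ≤ ∑ a', ∑ b', (K * K + 2 * K) * |Real.sin α * A a' b' k + Real.cos α * B a' b' k| := by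
    intro z
    refine (Finset.abs_sum_le_sum_abs _ _).trans (Finset.sum_le_sum fun a' _ => ?_)
    refine (Finset.abs_sum_le_sum_abs _ _).trans (Finset.sum_le_sum fun b' _ => ?_)
    rw [abs_mul]
    gcongr
    exact HH_abs_le hK _ _ _ _ _
  rw [stein k (fun z => DD K a b (xx A B ψ α z))
    (fun z => ∑ a', ∑ b', HH K a b a' b' (xx A B ψ α z) *
      (Real.sin α * A a' b' k + Real.cos α * B a' b' k))
    (max K (∑ a', ∑ b', (K * K + 2 * K) * |Real.sin α * A a' b' k + Real.cos α * B a' b' k|))]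
  · rw [integral_finsetSum _ fun a' _ => integrable_finsetSum _ fun b' _ =>
      (integrable_HH A B ψ hK α a a' b b').mul_const _]
    refine Finset.sum_congr rfl fun a' _ => ?_
    rw [integral_finsetSum _ fun b' _ => (integrable_HH A B ψ hK α a a' b b').mul_const _]
    refine Finset.sum_congr rfl fun b' _ => ?_
    rw [integral_mul_const, mul_comm]
  · intro z s
    exact hasDerivAt_DD K (fun a b => hasDerivAt_xx_update A B ψ α z k s a b) a b
  · intro z
    rw [abs_of_nonneg (DD_nonneg hK _ _ _)]
    exact (DD_le hK _ _ _).trans (le_max_left _ _)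
  · intro z
    exact (hb z).trans (le_max_right _ _)
  · exact ((continuous_DD K a b).comp (continuous_xx A B ψ α)).measurable
  · refine Continuous.measurable ?_
    have h1 := fun a' b' => continuous_HH (ι := ι) (κ := κ) K a b a' b'
    have h2 := continuous_xx A B ψ α
    fun_prop

lemma interp {K : ℝ} (hK : 0 ≤ K)
    (hAB : ∀ a b a' b', ∑ k, A a b k * B a' b' k = 0)
    (hsame : ∀ a b b', ∑ k, A a b k * A a b' k = ∑ k, B a b k * B a b' k)
    (hdiff : ∀ a b a' b', ∑ k, B a b k * B a' b' k ≤ ∑ k, A a b k * A a' b' k) :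
    ∫ z, FF K (fun a b => ψ a b + ∑ k, B a b k * z k) ∂(stdGaussianPi I)
      ≤ ∫ z, FF K (fun a b => ψ a b + ∑ k, A a b k * z k) ∂(stdGaussianPi I) := by
  have key : MonotoneOn (fun α => ∫ z, FF K (xx A B ψ α z) ∂(stdGaussianPi I))
      (Set.Icc 0 (π / 2)) := by
    refine monotoneOn_of_hasDerivWithinAt_nonneg (convex_Icc _ _)
      (fun α _ => (hasDerivAt_phi A B ψ hK α).continuousAt.continuousWithinAt)
      (fun α _ => (hasDerivAt_phi A B ψ hK α).hasDerivWithinAt) ?_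
    intro α hα
    rw [interior_Icc] at hα
    have hs : 0 ≤ Real.sin α := Real.sin_nonneg_of_nonneg_of_le_pi hα.1.le (by linarith [hα.2, Real.pi_pos])
    have hc : 0 ≤ Real.cos α := Real.cos_nonneg_of_neg_pi_div_two_le_of_le (by linarith [hα.1, Real.pi_pos]) hα.2.le
    have e1 : ∫ z, ∑ a, ∑ b, DD K a b (xx A B ψ α z) * xd A B α z a b ∂(stdGaussianPi I)
        = ∑ a, ∑ b, ∑ k, (Real.cos α * A a b k - Real.sin α * B a b k) *
            ∫ z, z k * DD K a b (xx A B ψ α z) ∂(stdGaussianPi I) := by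
      have e2 : ∀ z, ∑ a, ∑ b, DD K a b (xx A B ψ α z) * xd A B α z a b
          = ∑ a, ∑ b, ∑ k, (Real.cos α * A a b k - Real.sin α * B a b k) *
            (z k * DD K a b (xx A B ψ α z)) := by
        intro z
        refine Finset.sum_congr rfl fun a _ => Finset.sum_congr rfl fun b _ => ?_
        unfold xd
        rw [Finset.mul_sum]
        refine Finset.sum_congr rfl fun k _ => ?_
        ring
      simp only [e2]
      have hi := fun a b k => (integrable_zDD A B ψ hK α a b k).const_mul
        (Real.cos α * A a b k - Real.sin α * B a b k)
      rw [integral_finsetSum _ fun a _ => integrable_finsetSum _ fun b _ =>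
        integrable_finsetSum _ fun k _ => hi a b k]
      refine Finset.sum_congr rfl fun a _ => ?_
      rw [integral_finsetSum _ fun b _ => integrable_finsetSum _ fun k _ => hi a b k]
      refine Finset.sum_congr rfl fun b _ => ?_
      rw [integral_finsetSum _ fun k _ => hi a b k]
      refine Finset.sum_congr rfl fun k _ => ?_
      rw [integral_const_mul]
    have e3 : ∀ a b, ∑ k, (Real.cos α * A a b k - Real.sin α * B a b k) *
            ∫ z, z k * DD K a b (xx A B ψ α z) ∂(stdGaussianPi I)
        = ∑ a', ∑ b', Real.sin α * Real.cos α *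
            (∑ k, A a b k * A a' b' k - ∑ k, B a b k * B a' b' k) *
            ∫ z, HH K a b a' b' (xx A B ψ α z) ∂(stdGaussianPi I) := by
      intro a b
      simp only [stein_DD A B ψ hK, Finset.mul_sum]
      rw [Finset.sum_comm]
      refine Finset.sum_congr rfl fun a' _ => ?_
      rw [Finset.sum_comm]
      refine Finset.sum_congr rfl fun b' _ => ?_
      simp only [← mul_assoc, ← Finset.sum_mul]
      congr 1
      have h4 : ∀ k, (Real.cos α * A a b k - Real.sin α * B a b k) *
          (Real.sin α * A a' b' k + Real.cos α * B a' b' k)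
          = Real.sin α * Real.cos α * (A a b k * A a' b' k)
            - Real.sin α * Real.cos α * (B a b k * B a' b' k)
            + Real.cos α ^ 2 * (A a b k * B a' b' k) - Real.sin α ^ 2 * (A a' b' k * B a b k) := by
        intro k; ring
      simp only [h4, Finset.sum_add_distrib, Finset.sum_sub_distrib, ← Finset.mul_sum, hAB]
      ring
    rw [e1]
    simp only [e3]
    refine Finset.sum_nonneg fun a _ => Finset.sum_nonneg fun b _ => Finset.sum_nonneg fun a' _ =>
      Finset.sum_nonneg fun b' _ => ?_
    by_cases h : a = a'
    · subst h
      rw [hsame]; simp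
    · have := hdiff a b a' b'
      have h5 : 0 ≤ ∫ z, HH K a b a' b' (xx A B ψ α z) ∂(stdGaussianPi I) :=
        integral_nonneg fun z => HH_nonneg hK h _ _ _
      have : 0 ≤ ∑ k, A a b k * A a' b' k - ∑ k, B a b k * B a' b' k := by linarith
      positivity
  have := key (Set.left_mem_Icc.2 (by positivity)) (Set.right_mem_Icc.2 (by positivity))
    (by positivity : (0:ℝ) ≤ π / 2)
  have e0 : ∀ z, xx A B ψ 0 z = fun a b => ψ a b + ∑ k, B a b k * z k := by
    intro z; ext a b; simp [xx]
  have e1 : ∀ z, xx A B ψ (π / 2) z = fun a b => ψ a b + ∑ k, A a b k * z k := by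
    intro z; ext a b; simp [xx]
  simpa only [e0, e1] using this

end Interp


/-! ### Gordon's inequality for finite index sets -/

section GordonFin

variable {ι κ I : Type*} [Fintype ι] [Fintype κ] [Fintype I]

lemma exp_neg_sp (x : ℝ) : Real.exp (-sp x) ≤ Real.exp (-x) := by
  unfold sp
  apply Real.exp_le_exp.2
  have : x ≤ Real.log (1 + Real.exp x) := by
    rw [Real.le_log_iff_exp_le (by positivity)]
    linarith
  linarith

lemma tendsto_FF_zero (x : ι → κ → ℝ) (h : ∃ a, ∀ b, x a b < 0) :
    Tendsto (fun N : ℕ => FF (N : ℝ) (fun a b => (N : ℝ) * x a b)) atTop (𝓝 0) := by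
  obtain ⟨a, ha⟩ := h
  have h1 : ∀ b, Tendsto (fun N : ℕ => sp ((N : ℝ) * x a b)) atTop (𝓝 0) := by
    intro b
    have h2 : Tendsto (fun N : ℕ => (N : ℝ) * x a b) atTop atBot :=
      tendsto_natCast_atTop_atTop.atTop_mul_const_of_neg (ha b)
    have h3 : Tendsto (fun N : ℕ => 1 + Real.exp ((N : ℝ) * x a b)) atTop (𝓝 (1 + 0)) :=
      (Real.tendsto_exp_atBot.comp h2).const_add 1
    have h4 := h3.log (by norm_num)
    simpa [sp] using h4
  have h5 : Tendsto (fun N : ℕ => Pa a (fun a b => (N : ℝ) * x a b)) atTop (𝓝 1) := by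
    have := (tendsto_finsetSum Finset.univ fun b _ => h1 b).neg.rexp
    simpa [Pa] using this
  have h6 : Tendsto (fun N : ℕ => (N : ℝ) * Pa a (fun a b => (N : ℝ) * x a b)) atTop atTop :=
    tendsto_natCast_atTop_atTop.atTop_mul_pos zero_lt_one h5
  have h7 : Tendsto (fun N : ℕ => Real.exp (-((N : ℝ) * Pa a (fun a b => (N : ℝ) * x a b))))
      atTop (𝓝 0) := Real.tendsto_exp_neg_atTop_nhds_zero.comp h6
  refine squeeze_zero (fun N => (FF_pos _ _).le) (fun N => ?_) h7
  unfold FF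
  gcongr
  exact Finset.single_le_sum (f := fun a => Pa a (fun a b => (N : ℝ) * x a b))
    (fun a _ => (Pa_pos a _).le) (Finset.mem_univ a)

lemma tendsto_FF_one (x : ι → κ → ℝ) (h : ∀ a, ∃ b, 0 < x a b) :
    Tendsto (fun N : ℕ => FF (N : ℝ) (fun a b => (N : ℝ) * x a b)) atTop (𝓝 1) := by
  have h1 : ∀ a, Tendsto (fun N : ℕ => (N : ℝ) * Pa a (fun a b => (N : ℝ) * x a b)) atTop
      (𝓝 0) := by
    intro a
    obtain ⟨b, hb⟩ := h a
    have h2 : Tendsto (fun N : ℕ => (N : ℝ) * Real.exp (-((x a b) * N))) atTop (𝓝 0) := by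
      have := (tendsto_rpow_mul_exp_neg_mul_atTop_nhds_zero 1 (x a b) hb).comp
        tendsto_natCast_atTop_atTop
      simpa [Function.comp_def] using this
    refine squeeze_zero (fun N => mul_nonneg (by positivity) (Pa_pos _ _).le) (fun N => ?_) h2
    gcongr
    refine le_trans ?_ ((exp_neg_sp ((N : ℝ) * x a b)).trans (by rw [mul_comm]))
    unfold Pa
    gcongr
    exact Finset.single_le_sum (f := fun b => sp ((N : ℝ) * x a b))
      (fun b _ => sp_nonneg _) (Finset.mem_univ b)
  have h3 := (tendsto_finsetSum Finset.univ fun a _ => h1 a).neg.rexp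
  simpa [FF, Finset.mul_sum] using h3

lemma gordon_fin_aux (A B : ι → κ → I → ℝ) (ψ : ι → κ → ℝ)
    (hAB : ∀ a b a' b', ∑ k, A a b k * B a' b' k = 0)
    (hsame : ∀ a b b', ∑ k, A a b k * A a b' k = ∑ k, B a b k * B a b' k)
    (hdiff : ∀ a b a' b', ∑ k, B a b k * B a' b' k ≤ ∑ k, A a b k * A a' b' k) :
    stdGaussianPi I {z | ∃ a, ∀ b, ψ a b + ∑ k, A a b k * z k < 0}
      ≤ stdGaussianPi I {z | ∃ a, ∀ b, ψ a b + ∑ k, B a b k * z k ≤ 0} := by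
  set x : (I → ℝ) → ι → κ → ℝ := fun z a b => ψ a b + ∑ k, A a b k * z k with hx
  set y : (I → ℝ) → ι → κ → ℝ := fun z a b => ψ a b + ∑ k, B a b k * z k with hy
  have hcx : Continuous x := by rw [hx]; fun_prop
  have hcy : Continuous y := by rw [hy]; fun_prop
  set LA : Set (I → ℝ) := {z | ∃ a, ∀ b, x z a b < 0} with hLA
  set LB : Set (I → ℝ) := {z | ∃ a, ∀ b, y z a b ≤ 0} with hLB
  have mA : MeasurableSet LA := by
    rw [hLA]
    simp only [Set.ofPred_exists, Set.ofPred_forall]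
    exact MeasurableSet.iUnion fun a => MeasurableSet.iInter fun b =>
      measurableSet_lt (by fun_prop) (by fun_prop)
  have mB : MeasurableSet LB := by
    rw [hLB]
    simp only [Set.ofPred_exists, Set.ofPred_forall]
    exact MeasurableSet.iUnion fun a => MeasurableSet.iInter fun b =>
      measurableSet_le (by fun_prop) (by fun_prop)
  set fx : ℕ → (I → ℝ) → ℝ := fun N z => FF (N : ℝ) (fun a b => (N : ℝ) * x z a b) with hfx
  set fy : ℕ → (I → ℝ) → ℝ := fun N z => FF (N : ℝ) (fun a b => (N : ℝ) * y z a b) with hfy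
  have cfx : ∀ N, Continuous (fx N) := fun N => (continuous_FF _).comp (by fun_prop)
  have cfy : ∀ N, Continuous (fy N) := fun N => (continuous_FF _).comp (by fun_prop)
  have bfx : ∀ N z, ‖fx N z‖ ≤ 1 := fun N z => by
    rw [Real.norm_of_nonneg (FF_pos _ _).le]; exact FF_le_one (by positivity) _
  have bfy : ∀ N z, ‖fy N z‖ ≤ 1 := fun N z => by
    rw [Real.norm_of_nonneg (FF_pos _ _).le]; exact FF_le_one (by positivity) _
  have ifx : ∀ N, Integrable (fx N) (stdGaussianPi I) := fun N =>
    Integrable.of_bound (cfx N).aestronglyMeasurable 1 (ae_of_all _ (bfx N))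
  have ify : ∀ N, Integrable (fy N) (stdGaussianPi I) := fun N =>
    Integrable.of_bound (cfy N).aestronglyMeasurable 1 (ae_of_all _ (bfy N))
  have hcomp : ∀ N, ∫ z, fy N z ∂(stdGaussianPi I) ≤ ∫ z, fx N z ∂(stdGaussianPi I) := by
    intro N
    have hN : (0:ℝ) ≤ (N : ℝ) * N := by positivity
    have e : ∀ (C C' : ι → κ → I → ℝ) (a : ι) (b : κ) (a' : ι) (b' : κ),
        ∑ k, ((N : ℝ) * C a b k) * ((N : ℝ) * C' a' b' k)
        = ((N : ℝ) * N) * ∑ k, C a b k * C' a' b' k := by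
      intro C C' a b a' b'
      rw [Finset.mul_sum]
      exact Finset.sum_congr rfl fun k _ => by ring
    have := interp (fun a b k => (N : ℝ) * A a b k) (fun a b k => (N : ℝ) * B a b k)
      (fun a b => (N : ℝ) * ψ a b) (K := (N : ℝ)) (by positivity)
      (by intro a b a' b'; rw [e A B, hAB, mul_zero])
      (by intro a b b'; rw [e A A, e B B, hsame])
      (by intro a b a' b'; rw [e A A, e B B]; exact mul_le_mul_of_nonneg_left (hdiff _ _ _ _) hN)
    simpa only [hfx, hfy, hx, hy, mul_add, Finset.mul_sum, mul_assoc] using this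
  -- limits
  have limA : Tendsto (fun N => ∫ z, LA.indicator (fx N) z ∂(stdGaussianPi I)) atTop
      (𝓝 (∫ _, (0:ℝ) ∂(stdGaussianPi I))) := by
    refine tendsto_integral_of_dominated_convergence (fun _ => 1)
      (fun N => ((cfx N).measurable.indicator mA).aestronglyMeasurable) (integrable_const _)
      (fun N => ae_of_all _ fun z => (norm_indicator_le_norm_self _ _).trans (bfx N z))
      (ae_of_all _ fun z => ?_)
    by_cases hz : z ∈ LA
    · simp only [Set.indicator_of_mem hz]
      exact tendsto_FF_zero _ hz
    · simp only [Set.indicator_of_notMem hz]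
      exact tendsto_const_nhds
  have limB : Tendsto (fun N => ∫ z, LBᶜ.indicator (fy N) z ∂(stdGaussianPi I)) atTop
      (𝓝 (∫ z, LBᶜ.indicator (fun _ => (1:ℝ)) z ∂(stdGaussianPi I))) := by
    refine tendsto_integral_of_dominated_convergence (fun _ => 1)
      (fun N => ((cfy N).measurable.indicator mB.compl).aestronglyMeasurable) (integrable_const _)
      (fun N => ae_of_all _ fun z => (norm_indicator_le_norm_self _ _).trans (bfy N z))
      (ae_of_all _ fun z => ?_)
    by_cases hz : z ∈ LBᶜ
    · simp only [Set.indicator_of_mem hz]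
      refine tendsto_FF_one _ ?_
      simpa [hLB] using hz
    · simp only [Set.indicator_of_notMem hz]
      exact tendsto_const_nhds
  rw [integral_indicator_const _ mB.compl] at limB
  have hineq : ∀ N, ∫ z, LBᶜ.indicator (fy N) z ∂(stdGaussianPi I)
      ≤ ∫ z, LA.indicator (fx N) z ∂(stdGaussianPi I) + (stdGaussianPi I).real LAᶜ := by
    intro N
    calc _ ≤ ∫ z, fy N z ∂(stdGaussianPi I) := by
          refine integral_mono ((ify N).indicator mB.compl) (ify N) fun z => ?_
          exact Set.indicator_le_self' (fun z _ => (FF_pos _ _).le) z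
      _ ≤ ∫ z, fx N z ∂(stdGaussianPi I) := hcomp N
      _ = ∫ z, LA.indicator (fx N) z ∂(stdGaussianPi I)
          + ∫ z, LAᶜ.indicator (fx N) z ∂(stdGaussianPi I) := by
          rw [integral_indicator mA, integral_indicator mA.compl, integral_add_compl mA (ifx N)]
      _ ≤ _ := by
          gcongr
          have : (stdGaussianPi I).real LAᶜ
              = ∫ z, LAᶜ.indicator (fun _ => (1:ℝ)) z ∂(stdGaussianPi I) := by
            rw [integral_indicator_const _ mA.compl]; simp
          rw [this]
          refine integral_mono ((ifx N).indicator mA.compl)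
            ((integrable_const (1:ℝ)).indicator mA.compl) fun z => ?_
          exact Set.indicator_le_indicator (FF_le_one (by positivity) _)
  have := le_of_tendsto_of_tendsto' limB (limA.add_const _) hineq
  simp only [smul_eq_mul, mul_one, integral_zero, zero_add] at this
  rw [probReal_compl_eq_one_sub mA, probReal_compl_eq_one_sub mB] at this
  have h2 : (stdGaussianPi I).real LA ≤ (stdGaussianPi I).real LB := by linarith
  exact (ENNReal.toReal_le_toReal (measure_ne_top _ _) (measure_ne_top _ _)).1 h2

lemma gordon_fin {Ω : Type*} [MeasurableSpace Ω] (P : Measure Ω) (Z : Ω → I → ℝ)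
    (hZ : MeasurePreserving Z P (stdGaussianPi I))
    (A B : ι → κ → I → ℝ) (ψ : ι → κ → ℝ)
    (hAB : ∀ a b a' b', ∑ k, A a b k * B a' b' k = 0)
    (hsame : ∀ a b b', ∑ k, A a b k * A a b' k = ∑ k, B a b k * B a b' k)
    (hdiff : ∀ a b a' b', ∑ k, B a b k * B a' b' k ≤ ∑ k, A a b k * A a' b' k) :
    P {ω | ∃ a, ∀ b, ψ a b + ∑ k, A a b k * Z ω k < 0}
      ≤ P {ω | ∃ a, ∀ b, ψ a b + ∑ k, B a b k * Z ω k ≤ 0} := by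
  have mA : MeasurableSet {z : I → ℝ | ∃ a, ∀ b, ψ a b + ∑ k, A a b k * z k < 0} := by
    simp only [Set.ofPred_exists, Set.ofPred_forall]
    exact MeasurableSet.iUnion fun a => MeasurableSet.iInter fun b =>
      measurableSet_lt (by fun_prop) (by fun_prop)
  have mB : MeasurableSet {z : I → ℝ | ∃ a, ∀ b, ψ a b + ∑ k, B a b k * z k ≤ 0} := by
    simp only [Set.ofPred_exists, Set.ofPred_forall]
    exact MeasurableSet.iUnion fun a => MeasurableSet.iInter fun b =>
      measurableSet_le (by fun_prop) (by fun_prop)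
  have := gordon_fin_aux A B ψ hAB hsame hdiff
  rw [← hZ.measure_preimage mA.nullMeasurableSet, ← hZ.measure_preimage mB.nullMeasurableSet]
    at this
  exact this

end GordonFin


/-! ### Gordon's inequality for compact index sets -/

section GordonCompact

open TopologicalSpace

lemma gordon_cpt {S T I Ω : Type*} [Fintype I] [TopologicalSpace S] [SeparableSpace S] [Nonempty S]
    [TopologicalSpace T] [SeparableSpace T] [Nonempty T] [CompactSpace T]
    [MeasurableSpace Ω] (P : Measure Ω) [IsProbabilityMeasure P] (Z : Ω → I → ℝ)
    (hZ : MeasurePreserving Z P (stdGaussianPi I))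
    (A B : S → T → I → ℝ) (ψ : S → T → ℝ)
    (cA : Continuous (fun q : S × T => A q.1 q.2)) (cB : Continuous (fun q : S × T => B q.1 q.2))
    (cψ : Continuous (fun q : S × T => ψ q.1 q.2))
    (hAB : ∀ a b a' b', ∑ k, A a b k * B a' b' k = 0)
    (hsame : ∀ a b b', ∑ k, A a b k * A a b' k = ∑ k, B a b k * B a b' k)
    (hdiff : ∀ a b a' b', ∑ k, B a b k * B a' b' k ≤ ∑ k, A a b k * A a' b' k) :
    P {ω | ∃ a, ∀ b, ψ a b + ∑ k, A a b k * Z ω k < 0}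
      ≤ P {ω | ∃ a, ∀ b, ψ a b + ∑ k, B a b k * Z ω k ≤ 0} := by
  set X : Ω → S → T → ℝ := fun ω a b => ψ a b + ∑ k, A a b k * Z ω k with hX
  set Y : Ω → S → T → ℝ := fun ω a b => ψ a b + ∑ k, B a b k * Z ω k with hY
  have cX : ∀ ω, Continuous (fun q : S × T => X ω q.1 q.2) := by intro ω; simp only [hX]; fun_prop
  have cY : ∀ ω, Continuous (fun q : S × T => Y ω q.1 q.2) := by intro ω; simp only [hY]; fun_prop
  have hZm := hZ.measurable
  have mY : ∀ a b, Measurable (fun ω => Y ω a b) := by intro a b; simp only [hY]; fun_prop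
  let d := denseSeq S
  let e := denseSeq T
  -- reduce to finitely many rows
  have step1 : {ω | ∃ a, ∀ b, X ω a b < 0} ⊆ ⋃ m : ℕ, {ω | ∃ i : Fin m, ∀ b, X ω (d i) b < 0} := by
    rintro ω ⟨a, ha⟩
    have hopen : IsOpen {s : S | ∀ t ∈ (Set.univ : Set T), X ω s t < 0} := by
      refine isOpen_iff_mem_nhds.2 fun s hs => ?_
      refine isCompact_univ.eventually_forall_of_forall_eventually fun t ht => ?_
      exact (cX ω).continuousAt.eventually_lt continuousAt_const (hs t ht)
    obtain ⟨_, hs, ⟨i, rfl⟩⟩ := (denseRange_denseSeq S).inter_open_nonempty _ hopen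
      ⟨a, fun t _ => ha t⟩
    refine Set.mem_iUnion.2 ⟨i + 1, ⟨⟨i, Nat.lt_succ_self i⟩, fun b => hs b (Set.mem_univ b)⟩⟩
  have mono : Monotone fun m : ℕ => {ω | ∃ i : Fin m, ∀ b, X ω (d i) b < 0} := by
    rintro m m' h ω ⟨i, hi⟩
    exact ⟨⟨i, i.2.trans_le h⟩, hi⟩
  refine (measure_mono step1).trans ?_
  rw [mono.directed_le.measure_iUnion]
  refine iSup_le fun m => ?_
  -- fixed number of rows
  have step2 : ∀ r : ℕ, P {ω | ∃ i : Fin m, ∀ b, X ω (d i) b < 0}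
      ≤ P {ω | ∃ i : Fin m, ∀ j : Fin r, Y ω (d i) (e j) ≤ 0} := by
    intro r
    refine le_trans (measure_mono ?_) (gordon_fin P Z hZ
      (fun (i : Fin m) (j : Fin r) => A (d i) (e j)) (fun i j => B (d i) (e j))
      (fun i j => ψ (d i) (e j)) (fun _ _ _ _ => hAB _ _ _ _) (fun _ _ _ => hsame _ _ _)
      (fun _ _ _ _ => hdiff _ _ _ _))
    rintro ω ⟨i, hi⟩
    exact ⟨i, fun j => hi (e j)⟩
  have lim := tendsto_measure_iInter_atTop (μ := P)
    (s := fun r : ℕ => {ω | ∃ i : Fin m, ∀ j : Fin r, Y ω (d i) (e j) ≤ 0})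
    (fun r => by
      refine MeasurableSet.nullMeasurableSet ?_
      simp only [Set.ofPred_exists, Set.ofPred_forall]
      exact MeasurableSet.iUnion fun a => MeasurableSet.iInter fun b =>
        measurableSet_le (mY _ _) measurable_const)
    (by
      rintro r r' h ω ⟨i, hi⟩
      exact ⟨i, fun j => hi ⟨j, j.2.trans_le h⟩⟩)
    ⟨0, measure_ne_top _ _⟩
  refine (ge_of_tendsto' lim step2).trans (measure_mono ?_)
  intro ω hω
  rw [Set.mem_iInter] at hω
  -- pigeonhole on the finitely many rows
  have : ∃ i : Fin m, ∀ r : ℕ, ∀ j : Fin r, Y ω (d i) (e j) ≤ 0 := by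
    by_contra! hcon
    choose r j hj using hcon
    obtain ⟨i, hi⟩ := hω (Finset.univ.sup r)
    have := hi ⟨j i, (j i).2.trans_le (Finset.le_sup (f := r) (Finset.mem_univ i))⟩
    exact absurd this (not_le.2 (hj i))
  obtain ⟨i, hi⟩ := this
  refine ⟨d i, ?_⟩
  have hcl : IsClosed {t : T | Y ω (d i) t ≤ 0} :=
    isClosed_le ((cY ω).comp (Continuous.prodMk_right (d i))) continuous_const
  have hd : ∀ k : ℕ, e k ∈ {t : T | Y ω (d i) t ≤ 0} := fun k => hi (k + 1) ⟨k, Nat.lt_succ_self k⟩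
  intro b
  have hr : closure (Set.range e) ⊆ {t : T | Y ω (d i) t ≤ 0} :=
    closure_minimal (by rintro _ ⟨k, rfl⟩; exact hd k) hcl
  exact hr ((denseRange_denseSeq T) b)

end GordonCompact

/-! ### Characteristic functions and linear images of Gaussian vectors -/

section CF

lemma cf_stdG (c : ℝ) : ∫ s, Complex.exp (((c * s : ℝ) : ℂ) * Complex.I) ∂stdG
    = Complex.exp (((-(c ^ 2 / 2) : ℝ) : ℂ)) := by
  have := charFun_gaussianReal (μ := 0) (v := 1) c
  rw [charFun_apply_real] at this
  unfold stdG
  push_cast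
  rw [this]
  congr 1
  push_cast
  ring

lemma cf_pi {I : Type*} [Fintype I] (c : I → ℝ) :
    ∫ z, Complex.exp (((∑ k, c k * z k : ℝ) : ℂ) * Complex.I) ∂(stdGaussianPi I)
    = Complex.exp (((-((∑ k, c k ^ 2) / 2) : ℝ) : ℂ)) := by
  unfold stdGaussianPi
  have : ∀ z : I → ℝ, Complex.exp (((∑ k, c k * z k : ℝ) : ℂ) * Complex.I)
      = ∏ k, Complex.exp (((c k * z k : ℝ) : ℂ) * Complex.I) := by
    intro z
    rw [← Complex.exp_sum, ← Finset.sum_mul]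
    push_cast
    rfl
  simp only [this]
  rw [integral_fintype_prod_eq_prod (fun k s => Complex.exp (((c k * s : ℝ) : ℂ) * Complex.I))]
  simp only [cf_stdG]
  rw [← Complex.exp_sum]
  congr 1
  rw [← Complex.ofReal_sum, Finset.sum_neg_distrib, Finset.sum_div]

/-- Standard Gaussian matrices. -/
def gaussMat (n p : ℕ) : Measure (Fin n → Fin p → ℝ) :=
  Measure.pi fun _ : Fin n => stdGaussianPi (Fin p)

instance instProbGaussMat (n p : ℕ) : IsProbabilityMeasure (gaussMat n p) := by
  unfold gaussMat; infer_instance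

lemma cf_mat {n p : ℕ} (c : Fin n → Fin p → ℝ) :
    ∫ z, Complex.exp (((∑ i, ∑ j, c i j * z i j : ℝ) : ℂ) * Complex.I) ∂(gaussMat n p)
    = Complex.exp (((-((∑ i, ∑ j, c i j ^ 2) / 2) : ℝ) : ℂ)) := by
  unfold gaussMat
  have : ∀ z : Fin n → Fin p → ℝ, Complex.exp (((∑ i, ∑ j, c i j * z i j : ℝ) : ℂ) * Complex.I)
      = ∏ i, Complex.exp (((∑ j, c i j * z i j : ℝ) : ℂ) * Complex.I) := by
    intro z
    rw [← Complex.exp_sum, ← Finset.sum_mul]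
    push_cast
    rfl
  simp only [this]
  rw [integral_fintype_prod_eq_prod
    (fun i (s : Fin p → ℝ) => Complex.exp (((∑ j, c i j * s j : ℝ) : ℂ) * Complex.I))]
  simp only [cf_pi]
  rw [← Complex.exp_sum]
  congr 1
  rw [← Complex.ofReal_sum, Finset.sum_neg_distrib, Finset.sum_div]

lemma cf_prod {Ω Ω' : Type*} [MeasurableSpace Ω] [MeasurableSpace Ω'] (P : Measure Ω)
    (Q : Measure Ω') [SFinite P] [SFinite Q] (a : Ω → ℝ) (b : Ω' → ℝ) (x y : ℝ)
    (ha : ∫ ω, Complex.exp (((a ω : ℝ) : ℂ) * Complex.I) ∂P = Complex.exp (((-(x / 2) : ℝ) : ℂ)))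
    (hb : ∫ ω, Complex.exp (((b ω : ℝ) : ℂ) * Complex.I) ∂Q = Complex.exp (((-(y / 2) : ℝ) : ℂ))) :
    ∫ ω, Complex.exp (((a ω.1 + b ω.2 : ℝ) : ℂ) * Complex.I) ∂(P.prod Q)
      = Complex.exp (((-((x + y) / 2) : ℝ) : ℂ)) := by
  have e : ∀ ω : Ω × Ω', Complex.exp (((a ω.1 + b ω.2 : ℝ) : ℂ) * Complex.I)
      = Complex.exp (((a ω.1 : ℝ) : ℂ) * Complex.I) * Complex.exp (((b ω.2 : ℝ) : ℂ) * Complex.I) := by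
    intro ω
    rw [← Complex.exp_add]
    push_cast
    congr 1
    ring
  simp only [e]
  rw [integral_prod_mul (fun ω => Complex.exp (((a ω : ℝ) : ℂ) * Complex.I))
    (fun ω => Complex.exp (((b ω : ℝ) : ℂ) * Complex.I)), ha, hb, ← Complex.exp_add]
  congr 1
  push_cast
  ring

lemma mp_of_cf {Ω I : Type*} [Fintype I] [MeasurableSpace Ω] (P : Measure Ω)
    [IsProbabilityMeasure P] (Z : Ω → I → ℝ) (hZ : Measurable Z)
    (h : ∀ c : I → ℝ, ∫ ω, Complex.exp (((∑ k, c k * Z ω k : ℝ) : ℂ) * Complex.I) ∂P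
      = Complex.exp (((-((∑ k, c k ^ 2) / 2) : ℝ) : ℂ))) :
    MeasurePreserving Z P (stdGaussianPi I) := by
  refine ⟨hZ, ?_⟩
  have hp : IsProbabilityMeasure (P.map Z) := Measure.isProbabilityMeasure_map hZ.aemeasurable
  have hm : Measurable (WithLp.toLp 2 : (I → ℝ) → PiLp 2 (fun _ : I => ℝ)) := by fun_prop
  have key : ∀ (Q : Measure (I → ℝ)) (t : PiLp 2 (fun _ : I => ℝ)),
      charFun (Q.map (WithLp.toLp 2)) t
        = ∫ z, Complex.exp (((∑ k, t k * z k : ℝ) : ℂ) * Complex.I) ∂Q := by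
    intro Q t
    rw [charFun_apply, integral_map hm.aemeasurable]
    · exact integral_congr_ae (Filter.Eventually.of_forall fun z => by simp [PiLp.inner_apply])
    · refine Continuous.aestronglyMeasurable ?_
      fun_prop
  have hinj : (P.map Z).map (WithLp.toLp 2) = (stdGaussianPi I).map (WithLp.toLp 2) := by
    have : IsProbabilityMeasure ((P.map Z).map (WithLp.toLp 2 : (I → ℝ) → PiLp 2 (fun _ : I => ℝ))) :=
      Measure.isProbabilityMeasure_map hm.aemeasurable
    have : IsProbabilityMeasure
        ((stdGaussianPi I).map (WithLp.toLp 2 : (I → ℝ) → PiLp 2 (fun _ : I => ℝ))) :=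
      Measure.isProbabilityMeasure_map hm.aemeasurable
    refine Measure.ext_of_charFun (funext fun t => ?_)
    rw [key, key, cf_pi, integral_map hZ.aemeasurable, h]
    refine Continuous.aestronglyMeasurable ?_
    fun_prop
  exact (MeasurableEquiv.toLp 2 (I → ℝ)).map_measurableEquiv_injective hinj

end CF


/-! ### Gordon's inequality for bilinear Gaussian forms -/

section Bilin

open TopologicalSpace

lemma l2_sq {ι : Type*} [Fintype ι] (v : ι → ℝ) : l2 v * l2 v = ∑ i, v i ^ 2 :=
  Real.mul_self_sqrt (Finset.sum_nonneg fun _ _ => sq_nonneg _)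

lemma l2_nonneg {ι : Type*} [Fintype ι] (v : ι → ℝ) : 0 ≤ l2 v := Real.sqrt_nonneg _

lemma sum_mul_le_l2 {ι : Type*} [Fintype ι] (v v' : ι → ℝ) : ∑ i, v i * v' i ≤ l2 v * l2 v' :=
  Real.sum_mul_le_sqrt_mul_sqrt _ _ _

lemma continuous_l2 {ι : Type*} [Fintype ι] : Continuous (l2 : (ι → ℝ) → ℝ) := by
  unfold l2; fun_prop

/-- Index type of the joint Gaussian vector. -/
abbrev GI (n p : ℕ) := Unit ⊕ ((Fin n × Fin p) ⊕ (Fin p ⊕ Fin n))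

abbrev GΩ (n p : ℕ) := ℝ × ((Fin n → Fin p → ℝ) × ((Fin p → ℝ) × (Fin n → ℝ)))

def GZ (n p : ℕ) (ω : GΩ n p) : GI n p → ℝ :=
  Sum.elim (fun _ => ω.1) (Sum.elim (fun ij => ω.2.1 ij.1 ij.2) (Sum.elim ω.2.2.1 ω.2.2.2))

def GP (n p : ℕ) : Measure (GΩ n p) :=
  stdG.prod ((gaussMat n p).prod ((stdGaussianPi (Fin p)).prod (stdGaussianPi (Fin n))))

instance instProbGP (n p : ℕ) : IsProbabilityMeasure (GP n p) := by
  unfold GP; infer_instance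

lemma measurePreserving_GZ (n p : ℕ) : MeasurePreserving (GZ n p) (GP n p) (stdGaussianPi _) := by
  refine mp_of_cf _ _ ?_ ?_
  · refine measurable_pi_lambda _ ?_
    rintro (k | k | k | k) <;> simp only [GZ, Sum.elim_inl, Sum.elim_inr] <;> fun_prop
  · intro c
    have := cf_prod stdG ((gaussMat n p).prod ((stdGaussianPi (Fin p)).prod (stdGaussianPi (Fin n))))
      _ _ _ _ (cf_stdG (c (Sum.inl ()))) (cf_prod _ _ _ _ _ _
        (cf_mat (fun i j => c (Sum.inr (Sum.inl (i, j))))) (cf_prod _ _ _ _ _ _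
        (cf_pi (fun j => c (Sum.inr (Sum.inr (Sum.inl j)))))
        (cf_pi (fun i => c (Sum.inr (Sum.inr (Sum.inr i)))))))
    simp only [Fintype.sum_sum_type, GZ, Sum.elim_inl, Sum.elim_inr, Finset.univ_unique,
      Finset.sum_singleton, Fintype.sum_prod_type]
    exact this

lemma stdG_Iic : (1 : ENNReal) ≤ 2 * stdG (Set.Iic 0) := by
  have h1 : stdG (Set.Ici 0) = stdG (Set.Iic 0) := by
    have hm : stdG.map (fun x => -x) = stdG := by
      unfold stdG
      rw [gaussianReal_map_neg]; simp
    have : (stdG.map (fun x => -x)) (Set.Ici 0) = stdG (Set.Ici 0) := by rw [hm]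
    rw [Measure.map_apply measurable_neg measurableSet_Ici] at this
    rw [← this]
    congr 1
    ext x
    simp
  calc (1 : ENNReal) = stdG Set.univ := measure_univ.symm
    _ ≤ stdG (Set.Iic 0 ∪ Set.Ici 0) := by rw [Set.Iic_union_Ici]
    _ ≤ stdG (Set.Iic 0) + stdG (Set.Ici 0) := measure_union_le _ _
    _ = 2 * stdG (Set.Iic 0) := by rw [h1, two_mul]

lemma gordon_bilin {S T : Type*} (n p : ℕ) [TopologicalSpace S] [SeparableSpace S] [Nonempty S]
    [TopologicalSpace T] [SeparableSpace T] [Nonempty T] [CompactSpace T]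
    (v : S → T → Fin p → ℝ) (l : S → T → Fin n → ℝ) (ψ : S → T → ℝ)
    (cv : Continuous (fun q : S × T => v q.1 q.2)) (cl : Continuous (fun q : S × T => l q.1 q.2))
    (cψ : Continuous (fun q : S × T => ψ q.1 q.2))
    (hs : ∀ s t t', v s t = v s t' ∨ l s t = l s t') (ε : ℝ) (hε : ε * ε = 1) :
    gaussMat n p {G | ∃ s, ∀ t, ψ s t + ε * ∑ i, ∑ j, l s t i * v s t j * G i j < 0}
      ≤ 2 * ((stdGaussianPi (Fin p)).prod (stdGaussianPi (Fin n)))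
        {gh | ∃ s, ∀ t, ψ s t + ε * (l2 (v s t) * ∑ i, l s t i * gh.2 i
          - l2 (l s t) * ∑ j, v s t j * gh.1 j) ≤ 0} := by
  set A : S → T → GI n p → ℝ := fun s t => Sum.elim (fun _ => l2 (v s t) * l2 (l s t))
    (Sum.elim (fun ij => ε * (l s t ij.1 * v s t ij.2)) (fun _ => 0)) with hA
  set B : S → T → GI n p → ℝ := fun s t => Sum.elim (fun _ => 0) (Sum.elim (fun _ => 0)
    (Sum.elim (fun j => -ε * (l2 (l s t) * v s t j)) (fun i => ε * (l2 (v s t) * l s t i)))) with hB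
  have AA : ∀ a b a' b', ∑ k, A a b k * A a' b' k
      = (l2 (v a b) * l2 (v a' b')) * (l2 (l a b) * l2 (l a' b'))
        + (∑ i, l a b i * l a' b' i) * (∑ j, v a b j * v a' b' j) := by
    intro a b a' b'
    simp only [hA, Fintype.sum_sum_type, Sum.elim_inl, Sum.elim_inr, Finset.univ_unique,
      Finset.sum_singleton, Fintype.sum_prod_type, mul_zero, Finset.sum_const_zero, add_zero]
    congr 1
    · ring
    · rw [Finset.sum_mul_sum]
      refine Finset.sum_congr rfl fun i _ => Finset.sum_congr rfl fun j _ => ?_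
      linear_combination (l a b i * v a b j * l a' b' i * v a' b' j) * hε
  have BB : ∀ a b a' b', ∑ k, B a b k * B a' b' k
      = (l2 (l a b) * l2 (l a' b')) * (∑ j, v a b j * v a' b' j)
        + (l2 (v a b) * l2 (v a' b')) * (∑ i, l a b i * l a' b' i) := by
    intro a b a' b'
    simp only [hB, Fintype.sum_sum_type, Sum.elim_inl, Sum.elim_inr, Finset.univ_unique,
      mul_zero, Finset.sum_const_zero, zero_add]
    rw [Finset.mul_sum, Finset.mul_sum]
    congr 1
    · refine Finset.sum_congr rfl fun j _ => ?_
      linear_combination (l2 (l a b) * l2 (l a' b') * v a b j * v a' b' j) * hε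
    · refine Finset.sum_congr rfl fun j _ => ?_
      linear_combination (l2 (v a b) * l2 (v a' b') * l a b j * l a' b' j) * hε
  have key := gordon_cpt (GP n p) (GZ n p) (measurePreserving_GZ n p) A B ψ ?_ ?_ cψ ?_ ?_ ?_
  rotate_left
  · refine continuous_pi ?_
    have c1 := continuous_l2.comp cv
    have c2 := continuous_l2.comp cl
    simp only [Function.comp_def] at c1 c2
    rintro (k | k | k) <;> simp only [hA, Sum.elim_inl, Sum.elim_inr] <;> fun_prop
  · refine continuous_pi ?_
    have c1 := continuous_l2.comp cv
    have c2 := continuous_l2.comp cl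
    simp only [Function.comp_def] at c1 c2
    rintro (k | k | k | k) <;> simp only [hB, Sum.elim_inl, Sum.elim_inr] <;> fun_prop
  · intro a b a' b'
    simp [hA, hB, Fintype.sum_sum_type]
  · intro a b b'
    rw [AA, BB]
    rcases hs a b b' with h | h
    · have e1 : ∑ j, v a b j * v a b' j = l2 (v a b) * l2 (v a b') := by
        rw [h, l2_sq]; exact Finset.sum_congr rfl fun i _ => by ring
      rw [e1]; ring
    · have e1 : ∑ j, l a b j * l a b' j = l2 (l a b) * l2 (l a b') := by
        rw [h, l2_sq]; exact Finset.sum_congr rfl fun i _ => by ring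
      rw [e1]; ring
  · intro a b a' b'
    rw [AA, BB]
    nlinarith [mul_nonneg (sub_nonneg.2 (sum_mul_le_l2 (v a b) (v a' b')))
      (sub_nonneg.2 (sum_mul_le_l2 (l a b) (l a' b')))]
  set E := {G : Fin n → Fin p → ℝ |
    ∃ s, ∀ t, ψ s t + ε * ∑ i, ∑ j, l s t i * v s t j * G i j < 0} with hE
  set E' := {gh : (Fin p → ℝ) × (Fin n → ℝ) |
        ∃ s, ∀ t, ψ s t + ε * (l2 (v s t) * ∑ i, l s t i * gh.2 i
          - l2 (l s t) * ∑ j, v s t j * gh.1 j) ≤ 0} with hE'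
  have hl : stdG (Set.Iic 0) * gaussMat n p E
      ≤ GP n p {ω | ∃ a, ∀ b, ψ a b + ∑ k, A a b k * GZ n p ω k < 0} := by
    have : (Set.Iic (0 : ℝ)) ×ˢ (E ×ˢ (Set.univ : Set ((Fin p → ℝ) × (Fin n → ℝ))))
        ⊆ {ω | ∃ a, ∀ b, ψ a b + ∑ k, A a b k * GZ n p ω k < 0} := by
      rintro ⟨z, G, gh⟩ ⟨hz, ⟨s, hG⟩, -⟩
      refine ⟨s, fun t => ?_⟩
      have h1 := hG t
      simp only [hA, GZ, Fintype.sum_sum_type, Sum.elim_inl, Sum.elim_inr, Finset.univ_unique,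
        Finset.sum_singleton, Fintype.sum_prod_type, zero_mul, Finset.sum_const_zero, add_zero]
      have e : ∑ i, ∑ j, ε * (l s t i * v s t j) * G i j
          = ε * ∑ i, ∑ j, l s t i * v s t j * G i j := by
        simp only [Finset.mul_sum]
        exact Finset.sum_congr rfl fun i _ => Finset.sum_congr rfl fun j _ => by ring
      rw [e]
      have h2 : l2 (v s t) * l2 (l s t) * z ≤ 0 :=
        mul_nonpos_of_nonneg_of_nonpos (mul_nonneg (l2_nonneg _) (l2_nonneg _)) hz
      simp only at h1 ⊢
      linarith
    refine le_trans (le_of_eq ?_) (measure_mono this)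
    rw [GP, Measure.prod_prod, Measure.prod_prod, measure_univ, mul_one]
  have hr : GP n p {ω | ∃ a, ∀ b, ψ a b + ∑ k, B a b k * GZ n p ω k ≤ 0}
      ≤ ((stdGaussianPi (Fin p)).prod (stdGaussianPi (Fin n))) E' := by
    have : {ω | ∃ a, ∀ b, ψ a b + ∑ k, B a b k * GZ n p ω k ≤ 0}
        ⊆ (Set.univ : Set ℝ) ×ˢ ((Set.univ : Set (Fin n → Fin p → ℝ)) ×ˢ E') := by
      rintro ⟨z, G, gh⟩ ⟨s, hG⟩
      refine ⟨trivial, trivial, s, fun t => ?_⟩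
      have h1 := hG t
      simp only [hB, GZ, Fintype.sum_sum_type, Sum.elim_inl, Sum.elim_inr, Finset.univ_unique,
        zero_mul, Finset.sum_const_zero, zero_add] at h1
      refine le_trans (le_of_eq ?_) h1
      congr 1
      simp only [mul_sub, Finset.mul_sum]
      rw [sub_eq_neg_add, ← Finset.sum_neg_distrib]
      congr 1
      · exact Finset.sum_congr rfl fun i _ => by ring
      · exact Finset.sum_congr rfl fun i _ => by ring
    refine le_trans (measure_mono this) (le_of_eq ?_)
    rw [GP, Measure.prod_prod, Measure.prod_prod, measure_univ, measure_univ, one_mul, one_mul]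
  calc gaussMat n p E = 1 * gaussMat n p E := (one_mul _).symm
    _ ≤ 2 * stdG (Set.Iic 0) * gaussMat n p E := by gcongr; exact stdG_Iic
    _ = 2 * (stdG (Set.Iic 0) * gaussMat n p E) := mul_assoc _ _ _
    _ ≤ _ := by gcongr; exact hl.trans (key.trans hr)

end Bilin


/-! ### Min-max values over compact sets -/

section MinMax

/-- `min_{x ∈ K} max_{y ∈ L} a x y`. -/
def mm {X Y : Type*} (K : Set X) (L : Set Y) (a : X → Y → ℝ) : ℝ :=
  sInf ((fun x => sSup ((fun y => a x y) '' L)) '' K)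

variable {W X Y : Type*} [TopologicalSpace W] [TopologicalSpace X] [TopologicalSpace Y]

lemma continuous_mm {K : Set X} {L : Set Y} (hK : IsCompact K) (hL : IsCompact L)
    (a : W → X → Y → ℝ) (ha : Continuous (fun q : W × X × Y => a q.1 q.2.1 q.2.2)) :
    Continuous (fun o => mm K L (a o)) := by
  unfold mm
  have h1 : Continuous (fun q : W × X => sSup ((fun y => a q.1 q.2 y) '' L)) := by
    refine hL.continuous_sSup (f := fun (q : W × X) y => a q.1 q.2 y) ?_
    have : Continuous (fun r : (W × X) × Y => (r.1.1, r.1.2, r.2)) := by fun_prop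
    exact ha.comp this
  exact hK.continuous_sInf (f := fun o x => sSup ((fun y => a o x y) '' L)) h1

lemma le_sSup_image_iff {L : Set Y} (hL : IsCompact L) (hLn : L.Nonempty) (b : Y → ℝ)
    (hb : Continuous b) (t : ℝ) : t ≤ sSup (b '' L) ↔ ∃ y ∈ L, t ≤ b y := by
  obtain ⟨y, hy, h⟩ := hL.exists_sSup_image_eq hLn hb.continuousOn
  constructor
  · intro ht
    exact ⟨y, hy, h ▸ ht⟩
  · rintro ⟨z, hz, hzt⟩
    exact hzt.trans (le_csSup (hL.image hb).bddAbove ⟨z, hz, rfl⟩)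

lemma sSup_image_le_iff {L : Set Y} (hL : IsCompact L) (hLn : L.Nonempty) (b : Y → ℝ)
    (hb : Continuous b) (t : ℝ) : sSup (b '' L) ≤ t ↔ ∀ y ∈ L, b y ≤ t := by
  rw [csSup_le_iff (hL.image hb).bddAbove (hLn.image _)]
  simp

lemma mm_le_iff {K : Set X} {L : Set Y} (hK : IsCompact K) (hL : IsCompact L)
    (hKn : K.Nonempty) (hLn : L.Nonempty)
    (a : X → Y → ℝ) (ha : Continuous (fun q : X × Y => a q.1 q.2)) (t : ℝ) :
    mm K L a ≤ t ↔ ∃ x ∈ K, ∀ y ∈ L, a x y ≤ t := by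
  have h1 : Continuous (fun x => sSup ((fun y => a x y) '' L)) :=
    hL.continuous_sSup (f := fun x y => a x y) ha
  have h2 : ∀ x, Continuous (fun y => a x y) := fun x =>
    ha.comp (Continuous.prodMk_right x)
  simp only [← fun x => sSup_image_le_iff hL hLn _ (h2 x) t]
  unfold mm
  obtain ⟨x, hx, h⟩ := hK.exists_sInf_image_eq hKn h1.continuousOn
  constructor
  · intro ht
    exact ⟨x, hx, h ▸ ht⟩
  · rintro ⟨z, hz, hzt⟩
    exact (csInf_le (hK.image h1).bddBelow ⟨z, hz, rfl⟩).trans hzt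

lemma le_mm_iff {K : Set X} {L : Set Y} (hK : IsCompact K) (hL : IsCompact L)
    (hKn : K.Nonempty) (hLn : L.Nonempty)
    (a : X → Y → ℝ) (ha : Continuous (fun q : X × Y => a q.1 q.2)) (t : ℝ) :
    t ≤ mm K L a ↔ ∀ x ∈ K, ∃ y ∈ L, t ≤ a x y := by
  have h1 : Continuous (fun x => sSup ((fun y => a x y) '' L)) :=
    hL.continuous_sSup (f := fun x y => a x y) ha
  have h2 : ∀ x, Continuous (fun y => a x y) := fun x =>
    ha.comp (Continuous.prodMk_right x)
  simp only [← fun x => le_sSup_image_iff hL hLn _ (h2 x) t]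
  unfold mm
  rw [le_csInf_iff (hK.image h1).bddBelow (hKn.image _)]
  simp

/-- Passing to the limit of closed thresholds. -/
lemma limit_le {Ω : Type*} [MeasurableSpace Ω] (Q : Measure Ω) [IsProbabilityMeasure Q]
    (F : Ω → ℝ) (hF : Measurable F) (t : ℝ) (x : ENNReal)
    (h : ∀ ε : ℝ, 0 < ε → x ≤ 2 * Q {ω | F ω ≤ t + ε}) : x ≤ 2 * Q {ω | F ω ≤ t} := by
  have e : {ω | F ω ≤ t} = ⋂ m : ℕ, {ω | F ω ≤ t + 1 / ((m : ℝ) + 1)} := by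
    ext ω
    simp only [Set.mem_ofPred_eq, Set.mem_iInter]
    constructor
    · intro h m
      have : 0 < 1 / ((m : ℝ) + 1) := by positivity
      linarith
    · intro h
      refine le_of_forall_pos_lt_add fun ε hε => ?_
      obtain ⟨m, hm⟩ := exists_nat_one_div_lt hε
      linarith [h m]
  have hl : Tendsto (fun m : ℕ => Q {ω | F ω ≤ t + 1 / ((m : ℝ) + 1)}) atTop
      (𝓝 (Q {ω | F ω ≤ t})) := by
    rw [e]
    refine tendsto_measure_iInter_atTop
      (fun m => (measurableSet_le hF measurable_const).nullMeasurableSet) ?_ ⟨0, measure_ne_top _ _⟩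
    intro m m' hmm ω hω
    simp only [Set.mem_ofPred_eq] at hω ⊢
    have : 1 / ((m' : ℝ) + 1) ≤ 1 / ((m : ℝ) + 1) := by gcongr
    linarith
  refine ge_of_tendsto' (ENNReal.Tendsto.const_mul hl (Or.inr (by norm_num))) fun m => ?_
  exact h _ (by positivity)

end MinMax

section Feasible

lemma l2_le_one_iff {ι : Type*} [Fintype ι] (v : ι → ℝ) : l2 v ≤ 1 ↔ ∑ i, v i ^ 2 ≤ 1 := by
  unfold l2; rw [Real.sqrt_le_iff]; simp

lemma isCompact_ball {ι : Type*} [Fintype ι] : IsCompact {v : ι → ℝ | l2 v ≤ 1} := by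
  refine Metric.isCompact_of_isClosed_isBounded (isClosed_le continuous_l2 continuous_const) ?_
  refine (Metric.isBounded_iff_subset_closedBall 0).2 ⟨1, fun v hv => ?_⟩
  rw [mem_closedBall_zero_iff, pi_norm_le_iff_of_nonneg zero_le_one]
  intro i
  have h1 := (l2_le_one_iff v).1 hv
  have h2 : v i ^ 2 ≤ ∑ i, v i ^ 2 :=
    Finset.single_le_sum (f := fun i => v i ^ 2) (fun _ _ => sq_nonneg _) (Finset.mem_univ i)
  rw [Real.norm_eq_abs]
  exact (sq_le_one_iff_abs_le_one _).1 (h2.trans h1)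

lemma convex_ball {ι : Type*} [Fintype ι] : Convex ℝ {v : ι → ℝ | l2 v ≤ 1} := by
  intro x hx y hy a b ha hb hab
  simp only [Set.mem_ofPred_eq, l2_le_one_iff] at hx hy ⊢
  calc ∑ i, (a • x + b • y) i ^ 2 ≤ ∑ i, (a * x i ^ 2 + b * y i ^ 2) := by
        refine Finset.sum_le_sum fun i _ => ?_
        simp only [Pi.add_apply, Pi.smul_apply, smul_eq_mul]
        have hb' : b = 1 - a := by linarith
        subst hb'
        nlinarith [mul_nonneg (mul_nonneg ha hb) (sq_nonneg (x i - y i))]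
    _ = a * ∑ i, x i ^ 2 + b * ∑ i, y i ^ 2 := by
        rw [Finset.sum_add_distrib, Finset.mul_sum, Finset.mul_sum]
    _ ≤ a * 1 + b * 1 := by gcongr
    _ = 1 := by linarith

lemma zero_mem_ball {ι : Type*} [Fintype ι] : (0 : ι → ℝ) ∈ {v : ι → ℝ | l2 v ≤ 1} := by
  simp [l2]

lemma isCompact_lamSet (n : ℕ) (y : Fin n → ℝ) : IsCompact (lamSet n y) := by
  have : lamSet n y = {v : Fin n → ℝ | l2 v ≤ 1} ∩ {v | ∀ i, 0 ≤ y i * v i} := rfl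
  rw [this]
  refine isCompact_ball.inter_right ?_
  rw [Set.ofPred_forall]
  exact isClosed_iInter fun i => isClosed_le continuous_const (by fun_prop)

lemma convex_lamSet (n : ℕ) (y : Fin n → ℝ) : Convex ℝ (lamSet n y) := by
  have : lamSet n y = {v : Fin n → ℝ | l2 v ≤ 1} ∩ {v | ∀ i, 0 ≤ y i * v i} := rfl
  rw [this]
  refine convex_ball.inter ?_
  intro v hv v' hv' a b ha hb hab i
  have h1 := mul_nonneg ha (hv i)
  have h2 := mul_nonneg hb (hv' i)
  simp only [Pi.add_apply, Pi.smul_apply, smul_eq_mul]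
  nlinarith

lemma zero_mem_lamSet (n : ℕ) (y : Fin n → ℝ) : (0 : Fin n → ℝ) ∈ lamSet n y :=
  ⟨zero_mem_ball, by simp⟩

end Feasible

section Fixed

/-- Integrand of `xi0`. -/
def a0 (n p : ℕ) (κ : ℝ) (Λ : Fin p → ℝ) (y : Fin n → ℝ) (M : Fin n → Fin p → ℝ)
    (θ : Fin p → ℝ) (lam : Fin n → ℝ) : ℝ :=
  (Real.sqrt (p : ℝ))⁻¹ * ∑ i, lam i * (κ * y i - ∑ j, M i j * Real.sqrt (Λ j) * θ j)

/-- Integrand of `xi1`. -/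
def a1 (n p : ℕ) (κ : ℝ) (Λ w : Fin p → ℝ) (y : Fin n → ℝ)
    (ghu : (Fin p → ℝ) × (Fin n → ℝ) × (Fin n → ℝ)) (θ : Fin p → ℝ) (lam : Fin n → ℝ) : ℝ :=
  (Real.sqrt (p : ℝ))⁻¹ *
      ((∑ i, lam i * (κ * y i - (∑ j, Real.sqrt (Λ j) * w j * θ j) * ghu.2.2 i
          - l2 (projv w (fun j => Real.sqrt (Λ j) * θ j)) * ghu.2.1 i))
        + l2 lam * ∑ j, ghu.1 j * projv w (fun j' => Real.sqrt (Λ j') * θ j') j)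

variable (n p : ℕ) (κ : ℝ) (Λ w : Fin p → ℝ) (Θ : Set (Fin p → ℝ)) (y : Fin n → ℝ)

lemma xi0_eq (M : Fin n → Fin p → ℝ) :
    xi0 n p κ Λ Θ M y = mm Θ (lamSet n y) (a0 n p κ Λ y M) := rfl

lemma xi1_eq (g : Fin p → ℝ) (h u : Fin n → ℝ) :
    xi1 n p κ Λ w Θ g h u y = mm Θ (lamSet n y) (a1 n p κ Λ w y (g, h, u)) := rfl

lemma continuous_pv : Continuous (fun θ : Fin p → ℝ => projv w (fun j => Real.sqrt (Λ j) * θ j)) := by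
  unfold projv; fun_prop

lemma continuous_a0 : Continuous (fun q : (Fin n → Fin p → ℝ) × (Fin p → ℝ) × (Fin n → ℝ) =>
    a0 n p κ Λ y q.1 q.2.1 q.2.2) := by
  unfold a0; fun_prop

lemma continuous_a1 : Continuous (fun q : ((Fin p → ℝ) × (Fin n → ℝ) × (Fin n → ℝ)) ×
    (Fin p → ℝ) × (Fin n → ℝ) => a1 n p κ Λ w y q.1 q.2.1 q.2.2) := by
  have h1 := (continuous_pv p Λ w)
  have h2 := continuous_l2.comp h1
  have h3 : Continuous (l2 : (Fin n → ℝ) → ℝ) := continuous_l2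
  have h1' : ∀ j, Continuous (fun θ : Fin p → ℝ => projv w (fun j => Real.sqrt (Λ j) * θ j) j) :=
    fun j => (continuous_apply j).comp h1
  simp only [Function.comp_def] at h2
  have e2 : Continuous (fun q : ((Fin p → ℝ) × (Fin n → ℝ) × (Fin n → ℝ)) ×
    (Fin p → ℝ) × (Fin n → ℝ) => l2 (projv w (fun j => Real.sqrt (Λ j) * q.2.1 j))) :=
    h2.comp (by fun_prop : Continuous (fun q : ((Fin p → ℝ) × (Fin n → ℝ) × (Fin n → ℝ)) ×
    (Fin p → ℝ) × (Fin n → ℝ) => q.2.1))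
  have e1 : ∀ j, Continuous (fun q : ((Fin p → ℝ) × (Fin n → ℝ) × (Fin n → ℝ)) ×
    (Fin p → ℝ) × (Fin n → ℝ) => projv w (fun j => Real.sqrt (Λ j) * q.2.1 j) j) :=
    fun j => (h1' j).comp (by fun_prop : Continuous (fun q : ((Fin p → ℝ) × (Fin n → ℝ) × (Fin n → ℝ)) ×
    (Fin p → ℝ) × (Fin n → ℝ) => q.2.1))
  unfold a1; fun_prop

lemma continuous_xi0 (hΘ : IsCompact Θ) : Continuous (fun M => xi0 n p κ Λ Θ M y) := by
  simp only [xi0_eq]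
  exact continuous_mm hΘ (isCompact_lamSet n y) _ (continuous_a0 n p κ Λ y)

lemma continuous_xi1 (hΘ : IsCompact Θ) :
    Continuous (fun q : (Fin p → ℝ) × (Fin n → ℝ) × (Fin n → ℝ) =>
      xi1 n p κ Λ w Θ q.1 q.2.1 q.2.2 y) := by
  simp only [xi1_eq]
  exact continuous_mm hΘ (isCompact_lamSet n y) _ (continuous_a1 n p κ Λ w y)

/-- The matrix `u wᵀ + G Π`. -/
def mix (n p : ℕ) (w : Fin p → ℝ) (u : Fin n → ℝ) (G : Fin n → Fin p → ℝ) : Fin n → Fin p → ℝ :=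
  fun i j => u i * w j + projv w (G i) j

lemma sum_projv (x v : Fin p → ℝ) : ∑ j, projv w x j * v j = ∑ j, projv w v j * x j := by
  unfold projv
  simp only [sub_mul, Finset.sum_sub_distrib]
  congr 1
  · exact Finset.sum_congr rfl fun j _ => by ring
  · simp only [mul_assoc]
    rw [← Finset.mul_sum, ← Finset.mul_sum]
    ring

lemma a0_mix (u : Fin n → ℝ) (G : Fin n → Fin p → ℝ) (θ : Fin p → ℝ) (lam : Fin n → ℝ) :
    a0 n p κ Λ y (mix n p w u G) θ lam = (Real.sqrt (p : ℝ))⁻¹ *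
      ((∑ i, lam i * (κ * y i - (∑ j, Real.sqrt (Λ j) * w j * θ j) * u i))
      - ∑ i, ∑ j, lam i * projv w (fun j => Real.sqrt (Λ j) * θ j) j * G i j) := by
  unfold a0
  congr 1
  rw [← Finset.sum_sub_distrib]
  refine Finset.sum_congr rfl fun i _ => ?_
  have h : ∑ j, mix n p w u G i j * Real.sqrt (Λ j) * θ j
      = (∑ j, Real.sqrt (Λ j) * w j * θ j) * u i
        + ∑ j, projv w (fun j => Real.sqrt (Λ j) * θ j) j * G i j := by
    rw [← sum_projv, Finset.sum_mul, ← Finset.sum_add_distrib]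
    refine Finset.sum_congr rfl fun j _ => ?_
    unfold mix
    ring
  rw [h]
  simp only [mul_assoc]
  rw [← Finset.mul_sum]
  ring

lemma a1_expand (g : Fin p → ℝ) (h u : Fin n → ℝ) (θ : Fin p → ℝ) (lam : Fin n → ℝ) :
    a1 n p κ Λ w y (g, h, u) θ lam = (Real.sqrt (p : ℝ))⁻¹ *
      ((∑ i, lam i * (κ * y i - (∑ j, Real.sqrt (Λ j) * w j * θ j) * u i))
      - (l2 (projv w (fun j => Real.sqrt (Λ j) * θ j)) * ∑ i, lam i * h i
        - l2 lam * ∑ j, projv w (fun j => Real.sqrt (Λ j) * θ j) j * g j)) := by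
  unfold a1
  congr 1
  simp only [mul_comm (g _)]
  have : ∀ i, lam i * (κ * y i - (∑ j, Real.sqrt (Λ j) * w j * θ j) * u i
          - l2 (projv w (fun j => Real.sqrt (Λ j) * θ j)) * h i)
      = lam i * (κ * y i - (∑ j, Real.sqrt (Λ j) * w j * θ j) * u i)
        - l2 (projv w (fun j => Real.sqrt (Λ j) * θ j)) * (lam i * h i) := fun i => by ring
  simp only [this]
  rw [Finset.sum_sub_distrib, ← Finset.mul_sum]
  ring

lemma continuous_phi (u : Fin n → ℝ) : Continuous (fun q : (Fin p → ℝ) × (Fin n → ℝ) =>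
    ∑ i, q.2 i * (κ * y i - (∑ j, Real.sqrt (Λ j) * w j * q.1 j) * u i)) := by
  fun_prop

lemma fixed_le (hp : 0 < p) (hΘc : IsCompact Θ) (hΘne : Θ.Nonempty) (u : Fin n → ℝ) (t : ℝ) :
    gaussMat n p {G | xi0 n p κ Λ Θ (mix n p w u G) y ≤ t}
      ≤ 2 * ((stdGaussianPi (Fin p)).prod (stdGaussianPi (Fin n)))
        {gh | xi1 n p κ Λ w Θ gh.1 gh.2 u y ≤ t} := by
  have hsp : 0 < Real.sqrt (p : ℝ) := Real.sqrt_pos.2 (by exact_mod_cast hp)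
  have hL := isCompact_lamSet n y
  have hLn : (lamSet n y).Nonempty := ⟨0, zero_mem_lamSet n y⟩
  refine limit_le _ (fun gh : (Fin p → ℝ) × (Fin n → ℝ) => xi1 n p κ Λ w Θ gh.1 gh.2 u y) ?_ t _ ?_
  · exact ((continuous_xi1 n p κ Λ w Θ y hΘc).comp
      (by fun_prop : Continuous (fun gh : (Fin p → ℝ) × (Fin n → ℝ) => (gh.1, gh.2, u)))).measurable
  intro ε hε
  have : Nonempty Θ := hΘne.to_subtype
  have : Nonempty (lamSet n y) := hLn.to_subtype
  have : CompactSpace (lamSet n y) := isCompact_iff_compactSpace.1 hL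
  have key := gordon_bilin (S := Θ) (T := lamSet n y) n p
    (fun s _ => projv w (fun j => Real.sqrt (Λ j) * s.1 j)) (fun _ l => l.1)
    (fun s l => (∑ i, l.1 i * (κ * y i - (∑ j, Real.sqrt (Λ j) * w j * s.1 j) * u i))
      - Real.sqrt p * (t + ε))
    ((continuous_pv p Λ w).comp (by fun_prop)) (by fun_prop)
    (((continuous_phi n p κ Λ w y u).comp (by fun_prop : Continuous
      (fun q : Θ × lamSet n y => (q.1.1, q.2.1)))).sub continuous_const)
    (fun _ _ _ => Or.inl rfl) (-1) (by norm_num)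
  refine le_trans (measure_mono ?_) (key.trans ?_)
  · intro G hG
    simp only [Set.mem_ofPred_eq, xi0_eq] at hG
    rw [mm_le_iff hΘc hL hΘne hLn _ ((continuous_a0 n p κ Λ y).comp (Continuous.prodMk_right _))] at hG
    obtain ⟨θ, hθ, h⟩ := hG
    refine ⟨⟨θ, hθ⟩, fun l => ?_⟩
    have h1 := h l.1 l.2
    rw [a0_mix, inv_mul_le_iff₀ hsp] at h1
    have := mul_pos hsp hε
    simp only
    linarith
  · gcongr
    rename_i gh
    rintro ⟨θ, hθ⟩
    simp only [xi1_eq]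
    rw [mm_le_iff hΘc hL hΘne hLn _ ((continuous_a1 n p κ Λ w y).comp (Continuous.prodMk_right _))]
    refine ⟨θ.1, θ.2, fun l hl => ?_⟩
    have h1 := hθ ⟨l, hl⟩
    rw [a1_expand, inv_mul_le_iff₀ hsp]
    simp only at h1
    linarith

lemma fixed_ge (hp : 0 < p) (hΘc : IsCompact Θ) (hΘne : Θ.Nonempty) (hΘcv : Convex ℝ Θ)
    (u : Fin n → ℝ) (t : ℝ) :
    gaussMat n p {G | t ≤ xi0 n p κ Λ Θ (mix n p w u G) y}
      ≤ 2 * ((stdGaussianPi (Fin p)).prod (stdGaussianPi (Fin n)))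
        {gh | t ≤ xi1 n p κ Λ w Θ gh.1 gh.2 u y} := by
  have hsp : 0 < Real.sqrt (p : ℝ) := Real.sqrt_pos.2 (by exact_mod_cast hp)
  have hL := isCompact_lamSet n y
  have hLn : (lamSet n y).Nonempty := ⟨0, zero_mem_lamSet n y⟩
  have hneg := limit_le ((stdGaussianPi (Fin p)).prod (stdGaussianPi (Fin n)))
    (fun gh : (Fin p → ℝ) × (Fin n → ℝ) => - xi1 n p κ Λ w Θ gh.1 gh.2 u y) ?_ (-t)
    (gaussMat n p {G | t ≤ xi0 n p κ Λ Θ (mix n p w u G) y}) ?_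
  · simpa only [neg_le_neg_iff] using hneg
  · exact ((continuous_xi1 n p κ Λ w Θ y hΘc).comp
      (by fun_prop : Continuous (fun gh : (Fin p → ℝ) × (Fin n → ℝ) => (gh.1, gh.2, u)))).measurable.neg
  intro ε hε
  have : Nonempty Θ := hΘne.to_subtype
  have : Nonempty (lamSet n y) := hLn.to_subtype
  have : CompactSpace Θ := isCompact_iff_compactSpace.1 hΘc
  have key := gordon_bilin (S := lamSet n y) (T := Θ) n p
    (fun _ s => projv w (fun j => Real.sqrt (Λ j) * s.1 j)) (fun l _ => l.1)
    (fun l s => Real.sqrt p * (t - ε) -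
      (∑ i, l.1 i * (κ * y i - (∑ j, Real.sqrt (Λ j) * w j * s.1 j) * u i)))
    ((continuous_pv p Λ w).comp (by fun_prop)) (by fun_prop)
    (continuous_const.sub ((continuous_phi n p κ Λ w y u).comp (by fun_prop : Continuous
      (fun q : lamSet n y × Θ => (q.2.1, q.1.1)))))
    (fun _ _ _ => Or.inr rfl) 1 (by norm_num)
  refine le_trans (measure_mono ?_) (key.trans ?_)
  · intro G hG
    simp only [Set.mem_ofPred_eq, xi0_eq] at hG
    have hc := (continuous_a0 n p κ Λ y).comp (Continuous.prodMk_right (mix n p w u G))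
    rw [le_mm_iff hΘc hL hΘne hLn _ hc] at hG
    set b := a0 n p κ Λ y (mix n p w u G) with hb
    obtain ⟨x, hx, l, hl, hxl⟩ := Sion.exists_isSaddlePointOn (X := Θ) (Y := lamSet n y)
      (f := b) hΘne hΘcv hΘc
      (fun l _ => (hc.comp (Continuous.prodMk_left l)).lowerSemicontinuous.lowerSemicontinuousOn _)
      (fun l _ => by
        refine ConvexOn.quasiconvexOn ⟨hΘcv, fun θ _ θ' _ a c _ _ hac => le_of_eq ?_⟩
        simp only [hb, a0, Pi.add_apply, Pi.smul_apply, smul_eq_mul]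
        have hc' : c = 1 - a := by linarith
        subst hc'
        have e : ∀ i, ∑ j, mix n p w u G i j * Real.sqrt (Λ j) * (a * θ j + (1 - a) * θ' j)
            = a * ∑ j, mix n p w u G i j * Real.sqrt (Λ j) * θ j
              + (1 - a) * ∑ j, mix n p w u G i j * Real.sqrt (Λ j) * θ' j := by
          intro i
          rw [Finset.mul_sum, Finset.mul_sum, ← Finset.sum_add_distrib]
          exact Finset.sum_congr rfl fun j _ => by ring
        simp only [e]
        rw [mul_left_comm a, mul_left_comm (1 - a), ← mul_add]
        congr 1
        rw [Finset.mul_sum, Finset.mul_sum, ← Finset.sum_add_distrib]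
        exact Finset.sum_congr rfl fun i _ => by ring)
      (convex_lamSet n y) hLn hL
      (fun θ _ => (hc.comp (Continuous.prodMk_right θ)).upperSemicontinuous.upperSemicontinuousOn _)
      (fun θ _ => by
        refine ConcaveOn.quasiconcaveOn ⟨convex_lamSet n y, fun l _ l' _ a c _ _ hac => le_of_eq ?_⟩
        simp only [hb, a0, Pi.add_apply, Pi.smul_apply, smul_eq_mul]
        simp only [Finset.mul_sum]
        rw [← Finset.sum_add_distrib]
        exact Finset.sum_congr rfl fun i _ => by ring)
    obtain ⟨l', hl', h'⟩ := hG x hx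
    refine ⟨⟨l, hl⟩, fun θ => ?_⟩
    have h1 := h'.trans (hxl θ.1 θ.2 l' hl')
    rw [hb, a0_mix, le_inv_mul_iff₀ hsp] at h1
    have := mul_pos hsp hε
    simp only
    linarith
  · gcongr
    rename_i gh
    rintro ⟨l, hl⟩
    simp only [xi1_eq]
    have : ∀ z : ℝ, -z ≤ -t + ε ↔ t - ε ≤ z := fun z => by constructor <;> intro h <;> linarith
    rw [this, le_mm_iff hΘc hL hΘne hLn _ ((continuous_a1 n p κ Λ w y).comp (Continuous.prodMk_right _))]
    intro θ hθ
    refine ⟨l.1, l.2, ?_⟩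
    have h1 := hl ⟨θ, hθ⟩
    rw [a1_expand, le_inv_mul_iff₀ hsp]
    simp only at h1
    linarith

end Fixed


/-! ### Mixtures over sign vectors -/

section Mixture

/-- The sign vector of a Boolean vector. -/
def sgn {n : ℕ} (σ : Fin n → Bool) : Fin n → ℝ := fun i => if σ i then 1 else -1

/-- The weight of a sign vector. -/
def wt {n : ℕ} (q : Fin n → ℝ) (σ : Fin n → Bool) : ENNReal :=
  ∏ i, ENNReal.ofReal (if σ i then q i else 1 - q i)

instance instFiniteSignBer (q : ℝ) : IsFiniteMeasure (signBer q) := by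
  refine ⟨?_⟩
  simp [signBer]

lemma pi_signBer {n : ℕ} (q : Fin n → ℝ) :
    Measure.pi (fun i => signBer (q i)) = ∑ σ : Fin n → Bool, wt q σ • Measure.dirac (sgn σ) := by
  refine Measure.pi_eq fun s hs => ?_
  have h1 : ∀ i, signBer (q i) (s i) = ∑ b : Bool, ENNReal.ofReal (if b then q i else 1 - q i)
      * (s i).indicator 1 (if b then (1 : ℝ) else -1) := by
    intro i
    simp [signBer, hs i]
  simp only [h1]
  rw [Finset.prod_univ_sum, Fintype.piFinset_univ]
  simp only [Measure.coe_finsetSum, Finset.sum_apply, Measure.smul_apply, smul_eq_mul]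
  refine Finset.sum_congr rfl fun σ _ => ?_
  rw [Finset.prod_mul_distrib, wt, Measure.dirac_apply' _ (MeasurableSet.univ_pi hs)]
  congr 1
  by_cases h : ∀ i, sgn σ i ∈ s i
  · rw [Set.indicator_of_mem (by simpa using h)]
    symm
    refine Finset.prod_eq_one fun i _ => ?_
    exact Set.indicator_of_mem (h i) _
  · rw [Set.indicator_of_notMem (by simpa using h)]
    push Not at h
    obtain ⟨i, hi⟩ := h
    symm
    refine Finset.prod_eq_zero (Finset.mem_univ i) ?_
    exact Set.indicator_of_notMem hi _

lemma measurable_wt {n : ℕ} (f : ℝ → ℝ) (hf : Measurable f) (ρ : ℝ) (σ : Fin n → Bool) :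
    Measurable (fun u : Fin n → ℝ => wt (fun i => f (ρ * u i)) σ) := by
  unfold wt
  refine Finset.measurable_fun_prod _ fun i _ => ?_
  refine ENNReal.measurable_ofReal.comp ?_
  by_cases h : σ i
  · simp only [h, if_true]; fun_prop
  · simp only [h]; simp; fun_prop

lemma sgn_injective {n : ℕ} : Function.Injective (sgn : (Fin n → Bool) → Fin n → ℝ) := by
  intro σ τ h
  funext i
  have := congrFun h i
  unfold sgn at this
  by_cases h1 : σ i <;> by_cases h2 : τ i <;> simp [h1, h2] at this ⊢ <;> norm_num at this

variable {n : ℕ} {Ω Ω' : Type*} [MeasurableSpace Ω] [MeasurableSpace Ω'] (ν : Measure Ω)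
  (q : Ω → Fin n → ℝ) (J : Ω → (Fin n → ℝ) → Ω')

/-- Abstract mixture measure. -/
def mixMeas : Measure Ω' :=
  ν.bind fun ω => (Measure.pi fun i : Fin n => signBer (q ω i)).map fun y => J ω y

lemma mixMeas_apply (hq : ∀ σ, Measurable (fun ω => wt (q ω) σ))
    (hJ : Measurable (fun z : Ω × (Fin n → ℝ) => J z.1 z.2))
    {E : Set Ω'} (hE : MeasurableSet E) :
    mixMeas ν q J E = ∑ σ, ∫⁻ ω, wt (q ω) σ * {ω | J ω (sgn σ) ∈ E}.indicator 1 ω ∂ν := by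
  have hs : ∀ σ, Measurable (fun ω => J ω (sgn σ)) := fun σ =>
    hJ.comp (by fun_prop : Measurable (fun ω => (ω, (sgn σ : Fin n → ℝ))))
  have hK : ∀ (ω : Ω) (E : Set Ω'), MeasurableSet E →
      ((Measure.pi fun i : Fin n => signBer (q ω i)).map fun y => J ω y) E
      = ∑ σ, wt (q ω) σ * {ω | J ω (sgn σ) ∈ E}.indicator 1 ω := by
    intro ω E hE
    have hm : Measurable (fun y => J ω y) := hJ.comp measurable_prodMk_left
    rw [Measure.map_apply hm hE, pi_signBer]
    simp only [Measure.coe_finsetSum, Finset.sum_apply, Measure.smul_apply, smul_eq_mul]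
    refine Finset.sum_congr rfl fun σ _ => ?_
    rw [Measure.dirac_apply' _ (hm hE)]
    rfl
  have hterm : ∀ (E : Set Ω'), MeasurableSet E → ∀ σ : Fin n → Bool,
      Measurable (fun ω => wt (q ω) σ * {ω | J ω (sgn σ) ∈ E}.indicator (1 : Ω → ENNReal) ω) :=
    fun E hE σ => (hq σ).mul (measurable_one.indicator (hs σ hE))
  unfold mixMeas
  rw [Measure.bind_apply hE]
  · rw [← lintegral_finsetSum]
    · exact lintegral_congr fun ω => hK ω E hE
    · exact fun σ _ => hterm E hE σ
  · refine (Measure.measurable_of_measurable_coe _ fun E hE => ?_).aemeasurable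
    simp only [hK _ E hE]
    exact Finset.measurable_fun_sum _ fun σ _ => hterm E hE σ

lemma mixMeas_apply_sec (hq : ∀ σ, Measurable (fun ω => wt (q ω) σ))
    (hJ : Measurable (fun z : Ω × (Fin n → ℝ) => J z.1 z.2))
    (pj : Ω' → Fin n → ℝ) (bs : Ω' → Ω) (hpj : Measurable pj) (hbs : Measurable bs)
    (h1 : ∀ ω y, pj (J ω y) = y) (h2 : ∀ z, J (bs z) (pj z) = z) (h3 : ∀ ω y, bs (J ω y) = ω)
    {E : Set Ω'} (hE : ∀ σ : Fin n → Bool, MeasurableSet {ω | J ω (sgn σ) ∈ E}) :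
    mixMeas ν q J E = ∑ σ, ∫⁻ ω, wt (q ω) σ * {ω | J ω (sgn σ) ∈ E}.indicator 1 ω ∂ν := by
  set E1 : Set Ω' := ⋃ σ : Fin n → Bool, pj ⁻¹' {sgn σ} ∩ bs ⁻¹' {ω | J ω (sgn σ) ∈ E} with hE1
  set E2 : Set Ω' := E1 ∪ pj ⁻¹' (Set.range (sgn : (Fin n → Bool) → Fin n → ℝ))ᶜ with hE2
  have m1 : MeasurableSet E1 := MeasurableSet.iUnion fun σ =>
    (hpj (measurableSet_singleton _)).inter (hbs (hE σ))
  have m2 : MeasurableSet E2 := m1.union (hpj (Set.finite_range _).measurableSet.compl)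
  have s1 : E1 ⊆ E := by
    intro z hz
    obtain ⟨σ, hz1, hz2⟩ := Set.mem_iUnion.1 hz
    have e : pj z = sgn σ := hz1
    have : J (bs z) (sgn σ) ∈ E := hz2
    rwa [← e, h2] at this
  have s2 : E ⊆ E2 := by
    intro z hz
    by_cases h : pj z ∈ Set.range (sgn : (Fin n → Bool) → Fin n → ℝ)
    · left
      obtain ⟨σ, hσ⟩ := h
      refine Set.mem_iUnion.2 ⟨σ, hσ.symm, ?_⟩
      change J (bs z) (sgn σ) ∈ E
      rwa [hσ, h2]
    · exact Or.inr h
  have c1 : ∀ σ : Fin n → Bool, {ω | J ω (sgn σ) ∈ E1} = {ω | J ω (sgn σ) ∈ E} := by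
    intro σ
    ext ω
    refine ⟨fun h => s1 h, fun h => ?_⟩
    refine Set.mem_iUnion.2 ⟨σ, h1 _ _, ?_⟩
    change J (bs _) (sgn σ) ∈ E
    rw [h3]; exact h
  have c2 : ∀ σ : Fin n → Bool, {ω | J ω (sgn σ) ∈ E2} = {ω | J ω (sgn σ) ∈ E} := by
    intro σ
    ext ω
    refine ⟨fun h => ?_, fun h => s2 h⟩
    rcases h with h | h
    · exact s1 h
    · exact absurd ⟨σ, (h1 _ _).symm⟩ h
  refine le_antisymm ?_ ?_
  · refine (measure_mono s2).trans (le_of_eq ?_)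
    rw [mixMeas_apply ν q J hq hJ m2]
    simp only [c2]
  · refine le_trans (le_of_eq ?_) (measure_mono s1)
    rw [mixMeas_apply ν q J hq hJ m1]
    simp only [c1]

end Mixture

/-! ### Change of variables -/

section Change

lemma mp_mix (n p : ℕ) (w : Fin p → ℝ) (hw : ∑ j, w j ^ 2 = 1) :
    MeasurePreserving (fun q : (Fin n → ℝ) × (Fin n → Fin p → ℝ) => mix n p w q.1 q.2)
      ((stdGaussianPi (Fin n)).prod (gaussMat n p)) (gaussMat n p) := by
  have hm : Measurable (fun q : (Fin n → ℝ) × (Fin n → Fin p → ℝ) => mix n p w q.1 q.2) := by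
    unfold mix projv; fun_prop
  set flat : (Fin n → Fin p → ℝ) → (Fin n × Fin p → ℝ) := fun M ij => M ij.1 ij.2 with hflat
  set unflat : (Fin n × Fin p → ℝ) → (Fin n → Fin p → ℝ) := fun z i j => z (i, j) with hunflat
  have mf : Measurable flat := by rw [hflat]; fun_prop
  have mu : Measurable unflat := by rw [hunflat]; fun_prop
  have h1 : MeasurePreserving flat (gaussMat n p) (stdGaussianPi (Fin n × Fin p)) := by
    refine mp_of_cf _ _ mf fun c => ?_
    have := cf_mat (fun i j => c (i, j))
    simp only [Fintype.sum_prod_type, hflat]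
    exact this
  have h2 : MeasurePreserving (fun q : (Fin n → ℝ) × (Fin n → Fin p → ℝ) => flat (mix n p w q.1 q.2))
      ((stdGaussianPi (Fin n)).prod (gaussMat n p)) (stdGaussianPi (Fin n × Fin p)) := by
    refine mp_of_cf _ _ (mf.comp hm) fun c => ?_
    have := cf_prod (stdGaussianPi (Fin n)) (gaussMat n p) _ _ _ _
      (cf_pi (fun i => ∑ j, w j * c (i, j))) (cf_mat (fun i => projv w (fun j => c (i, j))))
    simp only [Fintype.sum_prod_type, hflat]
    have e1 : ∀ q : (Fin n → ℝ) × (Fin n → Fin p → ℝ), ∑ i, ∑ j, c (i, j) * mix n p w q.1 q.2 i j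
        = ∑ i, (∑ j, w j * c (i, j)) * q.1 i
          + ∑ i, ∑ j, projv w (fun j => c (i, j)) j * q.2 i j := by
      intro q
      rw [← Finset.sum_add_distrib]
      refine Finset.sum_congr rfl fun i _ => ?_
      rw [← sum_projv, Finset.sum_mul, ← Finset.sum_add_distrib]
      refine Finset.sum_congr rfl fun j _ => ?_
      unfold mix
      ring
    have e2 : ∑ i, ∑ j, c (i, j) ^ 2 = ∑ i, (∑ j, w j * c (i, j)) ^ 2
        + ∑ i, ∑ j, projv w (fun j => c (i, j)) j ^ 2 := by
      rw [← Finset.sum_add_distrib]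
      refine Finset.sum_congr rfl fun i _ => ?_
      have e : ∀ j, projv w (fun j => c (i, j)) j ^ 2
          = c (i, j) ^ 2 - 2 * (∑ k, w k * c (i, k)) * (w j * c (i, j))
            + (∑ k, w k * c (i, k)) ^ 2 * w j ^ 2 := by
        intro j; unfold projv; ring
      simp only [e]
      rw [Finset.sum_add_distrib, Finset.sum_sub_distrib, ← Finset.mul_sum, ← Finset.mul_sum, hw]
      ring
    simp only [e1]
    rw [e2]
    exact this
  refine ⟨hm, ?_⟩
  have e1 : (gaussMat n p).map (unflat ∘ flat) = gaussMat n p := Measure.map_id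
  have e2 : (fun q : (Fin n → ℝ) × (Fin n → Fin p → ℝ) => mix n p w q.1 q.2)
      = unflat ∘ (fun q => flat (mix n p w q.1 q.2)) := rfl
  rw [e2, ← Measure.map_map mu h2.measurable, h2.map_eq, ← h1.map_eq, Measure.map_map mu mf, e1]

lemma mix_w (n p : ℕ) (w : Fin p → ℝ) (hw : ∑ j, w j ^ 2 = 1) (u : Fin n → ℝ)
    (G : Fin n → Fin p → ℝ) (i : Fin n) : ∑ j, w j * mix n p w u G i j = u i := by
  have e : ∀ j, w j * mix n p w u G i j
      = (u i - ∑ k, w k * G i k) * w j ^ 2 + w j * G i j := by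
    intro j; unfold mix projv; ring
  simp only [e]
  rw [Finset.sum_add_distrib, ← Finset.mul_sum, hw]
  ring

lemma transfer (n p : ℕ) (w : Fin p → ℝ) (hw : ∑ j, w j ^ 2 = 1) (φ : (Fin n → ℝ) → ENNReal)
    (hφ : Measurable φ) (A : Set (Fin n → Fin p → ℝ)) (hA : MeasurableSet A)
    (B : Set ((Fin p → ℝ) × (Fin n → ℝ) × (Fin n → ℝ))) (hB : MeasurableSet B)
    (h : ∀ u, gaussMat n p {G | mix n p w u G ∈ A}
      ≤ 2 * ((stdGaussianPi (Fin p)).prod (stdGaussianPi (Fin n))) {gh | (gh.1, gh.2, u) ∈ B}) :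
    ∫⁻ M, φ (fun i => ∑ j, w j * M i j) * A.indicator 1 M ∂(gaussMat n p)
      ≤ 2 * ∫⁻ z, φ z.2.2 * B.indicator 1 z ∂((stdGaussianPi (Fin p)).prod
        ((stdGaussianPi (Fin n)).prod (stdGaussianPi (Fin n)))) := by
  have hmp := mp_mix n p w hw
  have hm := hmp.measurable
  have mF : Measurable (fun M : Fin n → Fin p → ℝ =>
      φ (fun i => ∑ j, w j * M i j) * A.indicator 1 M) :=
    (hφ.comp (by fun_prop)).mul (measurable_one.indicator hA)
  have mH : Measurable (fun z : (Fin p → ℝ) × (Fin n → ℝ) × (Fin n → ℝ) =>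
      φ z.2.2 * B.indicator 1 z) :=
    (hφ.comp (by fun_prop)).mul (measurable_one.indicator hB)
  rw [← hmp.lintegral_comp mF]
  simp only [mix_w n p w hw]
  change ∫⁻ a : (Fin n → ℝ) × (Fin n → Fin p → ℝ), φ a.1 * A.indicator 1 (mix n p w a.1 a.2)
    ∂((stdGaussianPi (Fin n)).prod (gaussMat n p)) ≤ _
  rw [lintegral_prod (fun a : (Fin n → ℝ) × (Fin n → Fin p → ℝ) =>
    φ a.1 * A.indicator 1 (mix n p w a.1 a.2)) ((hφ.comp measurable_fst).mul
    ((measurable_one.indicator hA).comp hm)).aemeasurable]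
  have hR : ∫⁻ z, φ z.2.2 * B.indicator 1 z ∂((stdGaussianPi (Fin p)).prod
        ((stdGaussianPi (Fin n)).prod (stdGaussianPi (Fin n))))
      = ∫⁻ u, φ u * ((stdGaussianPi (Fin p)).prod (stdGaussianPi (Fin n)))
        {gh | (gh.1, gh.2, u) ∈ B} ∂(stdGaussianPi (Fin n)) := by
    rw [← Measure.prodAssoc_prod, lintegral_map mH MeasurableEquiv.prodAssoc.measurable]
    refine (lintegral_prod_symm' _ (mH.comp MeasurableEquiv.prodAssoc.measurable)).trans ?_
    refine lintegral_congr fun u => ?_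
    have mB : MeasurableSet {gh : (Fin p → ℝ) × (Fin n → ℝ) | (gh.1, gh.2, u) ∈ B} :=
      (by fun_prop : Measurable (fun gh : (Fin p → ℝ) × (Fin n → ℝ) => (gh.1, gh.2, u))) hB
    rw [← lintegral_indicator_one mB, ← lintegral_const_mul _ (measurable_one.indicator mB)]
    rfl
  rw [hR, ← lintegral_const_mul' _ _ (by norm_num)]
  refine lintegral_mono fun u => ?_
  have mA : MeasurableSet {G : Fin n → Fin p → ℝ | mix n p w u G ∈ A} :=
    (hm.comp measurable_prodMk_left) hA
  have e : ∫⁻ G, φ u * A.indicator 1 (mix n p w u G) ∂(gaussMat n p)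
      = φ u * gaussMat n p {G | mix n p w u G ∈ A} := by
    rw [← lintegral_indicator_one mA, ← lintegral_const_mul _ (measurable_one.indicator mA)]
    rfl
  simp only
  rw [e, mul_left_comm]
  gcongr
  exact h u

/-- Comparison of the two mixtures. -/
lemma compare (n p : ℕ) (f : ℝ → ℝ) (hf : Measurable f) (ρ : ℝ) (w : Fin p → ℝ)
    (hw : ∑ j, w j ^ 2 = 1)
    (E0 : Set ((Fin n → Fin p → ℝ) × (Fin n → ℝ)))
    (E1 : Set ((Fin p → ℝ) × (Fin n → ℝ) × (Fin n → ℝ) × (Fin n → ℝ)))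
    (h0 : ∀ y, MeasurableSet {M | (M, y) ∈ E0})
    (h1 : ∀ y, MeasurableSet {z : (Fin p → ℝ) × (Fin n → ℝ) × (Fin n → ℝ) |
      (z.1, z.2.1, z.2.2, y) ∈ E1})
    (h : ∀ y u, gaussMat n p {G | (mix n p w u G, y) ∈ E0}
      ≤ 2 * ((stdGaussianPi (Fin p)).prod (stdGaussianPi (Fin n))) {gh | (gh.1, gh.2, u, y) ∈ E1}) :
    mu0 n p f ρ w E0 ≤ 2 * mu1 n p f ρ E1 := by
  have e0 : mu0 n p f ρ w = mixMeas (gaussMat n p) (fun M i => f (ρ * ∑ j, w j * M i j))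
      (fun M y => (M, y)) := rfl
  have e1 : mu1 n p f ρ = mixMeas ((stdGaussianPi (Fin p)).prod
      ((stdGaussianPi (Fin n)).prod (stdGaussianPi (Fin n)))) (fun z i => f (ρ * z.2.2 i))
      (fun z y => (z.1, z.2.1, z.2.2, y)) := rfl
  rw [e0, e1, mixMeas_apply_sec (gaussMat n p) (fun M i => f (ρ * ∑ j, w j * M i j))
    (fun M y => (M, y)) ?_ (by fun_prop) Prod.snd Prod.fst (by fun_prop) (by fun_prop)
    (fun _ _ => rfl) (fun _ => rfl) (fun _ _ => rfl) (fun σ => h0 _),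
    mixMeas_apply_sec ((stdGaussianPi (Fin p)).prod
      ((stdGaussianPi (Fin n)).prod (stdGaussianPi (Fin n)))) (fun z i => f (ρ * z.2.2 i))
      (fun z y => (z.1, z.2.1, z.2.2, y)) ?_ (by fun_prop) (fun z => z.2.2.2)
      (fun z => (z.1, z.2.1, z.2.2.1)) (by fun_prop) (by fun_prop)
    (fun _ _ => rfl) (fun _ => rfl) (fun _ _ => rfl) (fun σ => h1 _), Finset.mul_sum]
  · refine Finset.sum_le_sum fun σ _ => ?_
    exact transfer n p w hw (fun u => wt (fun i => f (ρ * u i)) σ) (measurable_wt f hf ρ σ) _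
      (h0 (sgn σ)) _ (h1 (sgn σ)) (h (sgn σ))
  · intro σ
    exact (measurable_wt f hf ρ σ).comp (by fun_prop : Measurable
      (fun z : (Fin p → ℝ) × (Fin n → ℝ) × (Fin n → ℝ) => z.2.2))
  · intro σ
    exact (measurable_wt f hf ρ σ).comp (by fun_prop : Measurable
      (fun M : Fin n → Fin p → ℝ => fun i => ∑ j, w j * M i j))

lemma main_le (n p : ℕ) (κ : ℝ) (f : ℝ → ℝ) (hf : Measurable f) (ρ : ℝ) (Λ w : Fin p → ℝ)
    (hw : ∑ j, w j ^ 2 = 1) (hp : 0 < p) (Θ : Set (Fin p → ℝ)) (hΘc : IsCompact Θ)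
    (hΘne : Θ.Nonempty) (t : ℝ) :
    mu0 n p f ρ w {q | xi0 n p κ Λ Θ q.1 q.2 ≤ t}
      ≤ 2 * mu1 n p f ρ {q | xi1 n p κ Λ w Θ q.1 q.2.1 q.2.2.1 q.2.2.2 ≤ t} := by
  refine compare n p f hf ρ w hw _ _ (fun y => ?_) (fun y => ?_) (fun y u => ?_)
  · exact measurableSet_le (continuous_xi0 n p κ Λ Θ y hΘc).measurable measurable_const
  · exact measurableSet_le (continuous_xi1 n p κ Λ w Θ y hΘc).measurable measurable_const
  · exact fixed_le n p κ Λ w Θ y hp hΘc hΘne u t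

lemma main_ge (n p : ℕ) (κ : ℝ) (f : ℝ → ℝ) (hf : Measurable f) (ρ : ℝ) (Λ w : Fin p → ℝ)
    (hw : ∑ j, w j ^ 2 = 1) (hp : 0 < p) (Θ : Set (Fin p → ℝ)) (hΘc : IsCompact Θ)
    (hΘne : Θ.Nonempty) (hΘcv : Convex ℝ Θ) (t : ℝ) :
    mu0 n p f ρ w {q | t ≤ xi0 n p κ Λ Θ q.1 q.2}
      ≤ 2 * mu1 n p f ρ {q | t ≤ xi1 n p κ Λ w Θ q.1 q.2.1 q.2.2.1 q.2.2.2} := by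
  refine compare n p f hf ρ w hw _ _ (fun y => ?_) (fun y => ?_) (fun y u => ?_)
  · exact measurableSet_le measurable_const (continuous_xi0 n p κ Λ Θ y hΘc).measurable
  · exact measurableSet_le measurable_const (continuous_xi1 n p κ Λ w Θ y hΘc).measurable
  · exact fixed_ge n p κ Λ w Θ y hp hΘc hΘne hΘcv u t

end Change

/-- Gordon comparison inequalities between the primary optimization value `ξ⁽⁰⁾` and the
auxiliary Gaussian optimization value `ξ⁽¹⁾`, over the unit ball and over an arbitrary
nonempty compact set `Θ` (with the last inequality requiring `Θ` convex). -/
theorem statement_10 (n p : ℕ) (κ : ℝ) (hκ : 0 ≤ κ)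
    (f : ℝ → ℝ) (hf : Measurable f) (hf01 : ∀ x, f x ∈ Set.Icc (0:ℝ) 1)
    (Λ : Fin p → ℝ) (hΛ : ∀ j, 0 < Λ j)
    (θs : Fin p → ℝ) (ρ : ℝ) (w : Fin p → ℝ)
    (hρ : ρ = l2 (fun j => Real.sqrt (Λ j) * θs j)) (hρpos : 0 < ρ)
    (hw : ∀ j, w j = Real.sqrt (Λ j) * θs j / ρ)
    (Θ : Set (Fin p → ℝ)) (hΘc : IsCompact Θ) (hΘne : Θ.Nonempty)
    (t : ℝ) :
    (mu0 n p f ρ w {q | xi0 n p κ Λ {θ : Fin p → ℝ | l2 θ ≤ 1} q.1 q.2 ≤ t}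
        ≤ 2 * mu1 n p f ρ
            {q | xi1 n p κ Λ w {θ : Fin p → ℝ | l2 θ ≤ 1} q.1 q.2.1 q.2.2.1 q.2.2.2 ≤ t})
    ∧ (mu0 n p f ρ w {q | t ≤ xi0 n p κ Λ {θ : Fin p → ℝ | l2 θ ≤ 1} q.1 q.2}
        ≤ 2 * mu1 n p f ρ
            {q | t ≤ xi1 n p κ Λ w {θ : Fin p → ℝ | l2 θ ≤ 1} q.1 q.2.1 q.2.2.1 q.2.2.2})
    ∧ (mu0 n p f ρ w {q | xi0 n p κ Λ Θ q.1 q.2 ≤ t}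
        ≤ 2 * mu1 n p f ρ {q | xi1 n p κ Λ w Θ q.1 q.2.1 q.2.2.1 q.2.2.2 ≤ t})
    ∧ (Convex ℝ Θ →
        mu0 n p f ρ w {q | t ≤ xi0 n p κ Λ Θ q.1 q.2}
          ≤ 2 * mu1 n p f ρ {q | t ≤ xi1 n p κ Λ w Θ q.1 q.2.1 q.2.2.1 q.2.2.2}) := by
  have hw1 : ∑ j, w j ^ 2 = 1 := by
    have h1 : ρ * ρ = ∑ j, (Real.sqrt (Λ j) * θs j) ^ 2 := by rw [hρ]; exact l2_sq _
    simp only [hw, div_pow]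
    rw [← Finset.sum_div, ← h1, sq]
    exact div_self (mul_pos hρpos hρpos).ne'
  have hp : 0 < p := by
    rcases Nat.eq_zero_or_pos p with h | h
    · subst h
      simp at hw1
    · exact h
  exact ⟨main_le n p κ f hf ρ Λ w hw1 hp _ isCompact_ball ⟨0, zero_mem_ball⟩ t,
    main_ge n p κ f hf ρ Λ w hw1 hp _ isCompact_ball ⟨0, zero_mem_ball⟩ convex_ball t,
    main_le n p κ f hf ρ Λ w hw1 hp Θ hΘc hΘne t,
    fun hcv => main_ge n p κ f hf ρ Λ w hw1 hp Θ hΘc hΘne hcv t⟩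

end MaxMargin
end
end
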